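/- arXiv:2505.21989 — 4 statements merged into one kernel-verified Lean document; each statement's English description precedes it below -/
import Mathlib

section
/- For all integers n ≥ 0, the number of (4,9)-regular overpartitions satisfies R̄_{4,9}(18n+12) ≡ 0 (mod 32). -/
/-- Number of partitions of `a` with no part divisible by `ℓ` or `μ`
(the non-overlined parts of an `(ℓ,μ)`-regular overpartition). -/
def regularCount (ℓ μ a : ℕ) : ℕ :=
  Fintype.card {p : a.Partition // ∀ i ∈ p.parts, ¬ ℓ ∣ i ∧ ¬ μ ∣ i}

/-- Number of partitions of `a` into distinct parts with no part divisible by `ℓ` or `μ`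
(the overlined parts of an `(ℓ,μ)`-regular overpartition). -/
def regularDistinctCount (ℓ μ a : ℕ) : ℕ :=
  Fintype.card {p : a.Partition // p.parts.Nodup ∧ ∀ i ∈ p.parts, ¬ ℓ ∣ i ∧ ¬ μ ∣ i}

/-- `Rbar ℓ μ n` is the number of `(ℓ,μ)`-regular overpartitions of `n`: pairs `(λ, δ)`
where `λ` is a partition, `δ` is a partition into distinct parts, `|λ| + |δ| = n`,
and no part of `λ` or `δ` is divisible by `ℓ` or by `μ`. -/
def Rbar (ℓ μ n : ℕ) : ℕ :=
  ∑ ab ∈ Finset.HasAntidiagonal.antidiagonal n, regularCount ℓ μ ab.1 * regularDistinctCount ℓ μ ab.2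

/-!
By an identity of Gauss the generating function of overpartitions is `1 / φ(-q)`, where
`φ(-q) = ∑ (-1) ^ k q ^ (k ^ 2)`, so that of `Rbar 4 9` is
`φ(-q ^ 4) φ(-q ^ 9) / (φ(-q) φ(-q ^ 36))`. Squares are `0` or `1` modulo `3`, hence
`φ(-q) = φ(-q ^ 9) (1 - 2 s(q))` with all exponents of `s` congruent to `1` modulo `3`, and the
generating function becomes `(1 - 2 s(q ^ 4)) / (1 - 2 s(q))`. Splitting
`φ(-q) φ(q) = φ(-q ^ 2) ^ 2` by exponents modulo `3` gives
`s(q) ^ 2 + 2 s(q) s(q ^ 2) ^ 2 = s(q ^ 2)` and shows that `s(q) + s(q ^ 2) ^ 2` is an odd series.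
Expand the quotient modulo `32`, with `t(q) = s(q ^ 4)`: no exponent of `s - t`, `s (s - t)` or
`s ^ 3 (s - t)` is divisible by `3`, while modulo `4` the functional equation turns `s ^ 2 (s - t)`
into an odd series times an even one. So the coefficient of every positive multiple of `6` is
divisible by `32`.
-/

namespace RegularOverpartition

open Finset Filter Topology PowerSeries
open scoped PowerSeries.WithPiTopology

lemma finite_le_of_tendsto_cofinite {ι : Type*} {e : ι → ℕ} (he : Tendsto e cofinite cofinite)
    (n : ℕ) : {i | e i ≤ n}.Finite := by
  simpa using he.eventually (Set.finite_le_nat n).eventually_cofinite_notMem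

lemma tendsto_add_cofinite {ι κ : Type*} {e : ι → ℕ} {e' : κ → ℕ}
    (he : Tendsto e cofinite cofinite) (he' : Tendsto e' cofinite cofinite) :
    Tendsto (fun z : ι × κ ↦ e z.1 + e' z.2) cofinite cofinite :=
  Tendsto.cofinite_of_finite_preimage_singleton fun n ↦
    ((finite_le_of_tendsto_cofinite he n).prod (finite_le_of_tendsto_cofinite he' n)).subset
      fun _ hz ↦ ⟨(Nat.le_add_right _ _).trans_eq hz, (Nat.le_add_left _ _).trans_eq hz⟩

section PowerSeriesTopology

variable {R : Type*} [TopologicalSpace R]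

lemma continuous_of_continuous_coeff [Semiring R] {α : Type*} [TopologicalSpace α]
    {f : α → R⟦X⟧} (hf : ∀ n, Continuous fun a ↦ coeff n (f a)) : Continuous f :=
  continuous_iff_continuousAt.2 fun _ ↦
    (WithPiTopology.tendsto_iff_coeff_tendsto R _ _ _).2 fun n ↦ (hf n).continuousAt

lemma continuous_expand [CommRing R] (p : ℕ) (hp : p ≠ 0) :
    Continuous (expand p hp : R⟦X⟧ → R⟦X⟧) :=
  continuous_of_continuous_coeff fun n ↦ by
    simp only [coeff_expand]
    split_ifs
    · exact WithPiTopology.continuous_coeff R _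
    · exact continuous_const

lemma continuous_rescale [CommSemiring R] [ContinuousMul R] (c : R) :
    Continuous (rescale c : R⟦X⟧ → R⟦X⟧) :=
  continuous_of_continuous_coeff fun n ↦ by
    simp only [coeff_rescale]
    exact (WithPiTopology.continuous_coeff R n).const_mul _

lemma tendsto_zero_of_X_pow_dvd [Semiring R] {u : ℕ → R⟦X⟧}
    (hu : ∀ n, X ^ n ∣ u n) : Tendsto u atTop (𝓝 0) :=
  (WithPiTopology.tendsto_iff_coeff_tendsto R _ _ _).2 fun d ↦
    tendsto_atTop_of_eventually_const (i₀ := d + 1) fun n hn ↦ by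
      rw [X_pow_dvd_iff.1 (hu n) d hn, map_zero]

lemma summable_C_mul_X_pow [Semiring R] {ι : Type*} (c : ι → R) {e : ι → ℕ}
    (he : Tendsto e cofinite cofinite) : Summable fun i ↦ C (c i) * X ^ e i := by
  refine (WithPiTopology.summable_iff_summable_coeff R).2 fun n ↦ ?_
  refine summable_of_hasFiniteSupport <|
    (he (Set.finite_singleton n).compl_mem_cofinite).subset fun i hi h ↦ hi ?_
  simp only [coeff_C_mul_X_pow, if_neg (Ne.symm h)]

lemma hasSum_C_mul_X_pow_mul [CommSemiring R] [IsTopologicalSemiring R] [T3Space R] {ι κ : Type*}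
    {c : ι → R} {d : κ → R} {e : ι → ℕ} {e' : κ → ℕ} {f g : R⟦X⟧}
    (he : Tendsto e cofinite cofinite) (he' : Tendsto e' cofinite cofinite)
    (hf : HasSum (fun i ↦ C (c i) * X ^ e i) f) (hg : HasSum (fun k ↦ C (d k) * X ^ e' k) g) :
    HasSum (fun z : ι × κ ↦ C (c z.1 * d z.2) * X ^ (e z.1 + e' z.2)) (f * g) := by
  have terms (z : ι × κ) : C (c z.1 * d z.2) * X ^ (e z.1 + e' z.2) =
      C (c z.1) * X ^ e z.1 * (C (d z.2) * X ^ e' z.2) := by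
    rw [map_mul, pow_add, mul_mul_mul_comm]
  have summable := summable_C_mul_X_pow (fun z : ι × κ ↦ c z.1 * d z.2)
    (tendsto_add_cofinite he he')
  simp only [terms] at summable ⊢
  have : T3Space R⟦X⟧ := inferInstanceAs (T3Space ((Unit →₀ ℕ) → R))
  exact (hf.mul hg summable :)

end PowerSeriesTopology

theorem hasProd_powerSeriesMk_card_distinct_restricted (R : Type*) [CommSemiring R]
    [TopologicalSpace R] [T2Space R] (p : ℕ → Prop) [DecidablePred p] :
    HasProd (fun i ↦ if p (i + 1) then 1 + X ^ (i + 1) else 1)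
      (PowerSeries.mk fun n ↦
        (#{π : n.Partition | π.parts.Nodup ∧ ∀ i ∈ π.parts, p i} : R)) := by
  convert! Nat.Partition.hasProd_genFun (fun i c ↦ if p i ∧ c < 2 then (1 : R) else 0) using 1
  · ext1 i
    rw [tsum_eq_single 0 fun j hj ↦ by simp [show ¬ j + 1 < 2 by lia]]
    by_cases h : p (i + 1) <;> simp [h]
  · ext n
    simp_rw [Nat.Partition.coeff_genFun, Finsupp.prod, prod_boole, coeff_mk, sum_boole]
    congr! 3 with π
    simp only [Multiset.nodup_iff_count_le_one, Multiset.toFinsupp_support,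
      Multiset.mem_toFinset, Multiset.toFinsupp_apply]
    grind [Multiset.count_eq_zero]

section OverpartitionSeries

/-- The generating function of overpartitions all of whose parts, overlined or not, satisfy `p`. -/
noncomputable def overpartitionSeries (p : ℕ → Prop) [DecidablePred p] : ℤ⟦X⟧ :=
  PowerSeries.mk (fun n ↦ (#(Nat.Partition.restricted n p) : ℤ)) *
    PowerSeries.mk fun n ↦ (#{π : n.Partition | π.parts.Nodup ∧ ∀ i ∈ π.parts, p i} : ℤ)

theorem mk_Rbar (ℓ μ : ℕ) :
    PowerSeries.mk (fun n ↦ (Rbar ℓ μ n : ℤ)) =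
      overpartitionSeries fun i ↦ ¬ ℓ ∣ i ∧ ¬ μ ∣ i := by
  ext n
  simp [overpartitionSeries, Rbar, regularCount, regularDistinctCount, Fintype.card_subtype,
    Nat.Partition.restricted, coeff_mul]

/-- The factor `(1 + X ^ k) / (1 - X ^ k)` that the parts equal to `k` contribute to an
overpartition series; for `k = 0` it is a junk value. -/
noncomputable def overpartitionFactor (k : ℕ) : ℤ⟦X⟧ :=
  (∑' j : ℕ, X ^ (k * j)) * (1 + X ^ k)

lemma overpartitionFactor_mul_one_sub {k : ℕ} (hk : k ≠ 0) :
    overpartitionFactor k * (1 - X ^ k) = 1 + X ^ k := by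
  have geom : (∑' j : ℕ, (X : ℤ⟦X⟧) ^ (k * j)) * (1 - X ^ k) = 1 := by
    simp_rw [pow_mul]
    exact WithPiTopology.tsum_pow_mul_one_sub_of_constantCoeff_eq_zero (by simp [hk])
  rw [overpartitionFactor, mul_right_comm, geom, one_mul]

lemma one_sub_X_pow_ne_zero {R : Type*} [Ring R] [Nontrivial R] {k : ℕ} (hk : k ≠ 0) :
    (1 : R⟦X⟧) - X ^ k ≠ 0 := fun h ↦ by
  simpa [hk] using congrArg constantCoeff h

lemma expand_overpartitionFactor {d k : ℕ} (hd : d ≠ 0) (hk : k ≠ 0) :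
    expand d hd (overpartitionFactor k) = overpartitionFactor (d * k) := by
  refine mul_right_cancel₀ (one_sub_X_pow_ne_zero (mul_ne_zero hd hk)) ?_
  rw [overpartitionFactor_mul_one_sub (mul_ne_zero hd hk)]
  simpa [pow_mul] using congrArg (expand d hd) (overpartitionFactor_mul_one_sub hk)

theorem hasProd_overpartitionSeries (p : ℕ → Prop) [DecidablePred p] :
    HasProd (fun i ↦ if p (i + 1) then overpartitionFactor (i + 1) else 1)
      (overpartitionSeries p) := by
  convert! (Nat.Partition.hasProd_powerSeriesMk_card_restricted ℤ p).mul
    (hasProd_powerSeriesMk_card_distinct_restricted ℤ p) using 1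
  ext1 i
  split_ifs <;> simp [overpartitionFactor]

theorem overpartitionSeries_dvd {d : ℕ} (hd : d ≠ 0) :
    overpartitionSeries (d ∣ ·) = expand d hd (overpartitionSeries fun _ ↦ True) := by
  have multiples_injective : Function.Injective fun i ↦ d * (i + 1) - 1 := fun i j hij ↦ by
    have : d * (i + 1) ≠ 0 ∧ d * (j + 1) ≠ 0 := by simp [hd]
    exact Nat.succ_injective (Nat.eq_of_mul_eq_mul_left (Nat.pos_of_ne_zero hd) (by grind))
  have over_multiples := (multiples_injective.hasProd_iff fun j hj ↦ if_neg fun ⟨i, hi⟩ ↦ hj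
    ⟨i - 1, by cases i <;> grind⟩).2 (hasProd_overpartitionSeries (d ∣ ·))
  refine over_multiples.unique ?_
  convert! (hasProd_overpartitionSeries fun _ ↦ True).map (expand d hd)
    (continuous_expand d hd) using 1
  ext1 i
  have index : d * (i + 1) - 1 + 1 = d * (i + 1) :=
    Nat.sub_add_cancel (Nat.one_le_iff_ne_zero.2 (by simp [hd]))
  simp [index, expand_overpartitionFactor hd]

theorem overpartitionSeries_not_dvd_and_not_dvd {ℓ μ : ℕ} (h : ℓ.Coprime μ) :
    overpartitionSeries (fun i ↦ ¬ ℓ ∣ i ∧ ¬ μ ∣ i) * overpartitionSeries (ℓ ∣ ·) *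
        overpartitionSeries (μ ∣ ·) =
      overpartitionSeries (fun _ ↦ True) * overpartitionSeries (ℓ * μ ∣ ·) := by
  refine (((hasProd_overpartitionSeries _).mul (hasProd_overpartitionSeries _)).mul
    (hasProd_overpartitionSeries _)).unique ?_
  convert! (hasProd_overpartitionSeries _).mul (hasProd_overpartitionSeries _) using 1
  ext1 i
  have mul_dvd_iff : ℓ * μ ∣ i + 1 ↔ ℓ ∣ i + 1 ∧ μ ∣ i + 1 :=
    ⟨fun h ↦ ⟨dvd_of_mul_right_dvd h, dvd_of_mul_left_dvd h⟩, fun ⟨hℓ, hμ⟩ ↦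
      h.mul_dvd_of_dvd_of_dvd hℓ hμ⟩
  by_cases hℓ : ℓ ∣ i + 1 <;> by_cases hμ : μ ∣ i + 1 <;> simp [mul_dvd_iff, hℓ, hμ]

end OverpartitionSeries

section GaussIdentity

variable {R : Type*} [CommRing R]

/-- A summand of the correction term in the finite form, due to Shanks, of the identity of Gauss. -/
def shanksTerm (x : R) (n s : ℕ) : R :=
  (-1) ^ (s + 1) * x ^ ((s + 1) * (n + 1)) * (∏ i ∈ range s, (1 + x ^ (i + 1))) *
    ∏ i ∈ Ico (s + 1) n, (1 - x ^ (i + 1))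

lemma sum_shanksTerm_succ_sub (x : R) {m n : ℕ} (hm : m ≤ n) :
    ∑ s ∈ range m, (shanksTerm x (n + 1) s - (1 + x ^ (n + 1)) * shanksTerm x n s) =
      (-1) ^ (m + 1) * x ^ ((m + 1) * (n + 1)) * (∏ i ∈ range m, (1 + x ^ (i + 1))) *
          (∏ i ∈ Ico m n, (1 - x ^ (i + 1))) +
        x ^ (n + 1) * ∏ i ∈ range n, (1 - x ^ (i + 1)) := by
  induction m with
  | zero => simp
  | succ m ih =>
    rw [sum_range_succ, ih (by lia), shanksTerm, shanksTerm, prod_Ico_succ_top (by lia),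
      prod_range_succ _ m, prod_eq_prod_Ico_succ_bot (by lia : m < n)]
    ring

theorem prod_one_add_pow_mul_sum_neg_one_pow_mul_pow_sq (x : R) (n : ℕ) :
    (∏ i ∈ range n, (1 + x ^ (i + 1))) *
        (1 + 2 * ∑ s ∈ range n, (-1) ^ (s + 1) * x ^ ((s + 1) ^ 2)) =
      ∏ i ∈ range n, (1 - x ^ (i + 1)) + 2 * ∑ s ∈ range n, shanksTerm x n s := by
  induction n with
  | zero => simp
  | succ n ih =>
    have telescope := sum_shanksTerm_succ_sub x le_rfl (m := n)
    have last : shanksTerm x (n + 1) n =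
        (-1) ^ (n + 1) * x ^ ((n + 1) * (n + 2)) * ∏ i ∈ range n, (1 + x ^ (i + 1)) := by
      simp [shanksTerm]
    rw [sum_sub_distrib, ← mul_sum, Ico_self, prod_empty, mul_one] at telescope
    rw [prod_range_succ, prod_range_succ, sum_range_succ, sum_range_succ, last]
    linear_combination (1 + x ^ (n + 1)) * ih - 2 * telescope

lemma pow_dvd_sum_shanksTerm (x : R) (n : ℕ) : x ^ (n + 1) ∣ ∑ s ∈ range n, shanksTerm x n s :=
  dvd_sum fun s _ ↦ (((pow_dvd_pow x (Nat.le_mul_of_pos_left _ s.succ_pos)).mul_left _).mul_right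
    _).mul_right _

/-- The theta series `φ(-q) = ∑ (-1) ^ k q ^ (k ^ 2)`, the sum being over all integers `k`. -/
noncomputable def altTheta : ℤ⟦X⟧ :=
  ∑' k : ℤ, C (k.negOnePow : ℤ) * X ^ k.natAbs ^ 2

lemma tendsto_natAbs_sq_cofinite : Tendsto (fun k : ℤ ↦ k.natAbs ^ 2) cofinite cofinite :=
  Tendsto.cofinite_of_finite_preimage_singleton fun n ↦
    (Set.finite_Icc (-n : ℤ) n).subset fun k hk ↦ by
      have : k.natAbs ≤ n := hk ▸ Nat.le_self_pow two_ne_zero _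
      exact ⟨by lia, by lia⟩

lemma hasSum_altTheta : HasSum (fun k : ℤ ↦ C (k.negOnePow : ℤ) * X ^ k.natAbs ^ 2) altTheta :=
  (summable_C_mul_X_pow _ tendsto_natAbs_sq_cofinite).hasSum

lemma tendsto_sum_altTheta :
    Tendsto (fun n ↦ 1 + 2 * ∑ s ∈ range n, (-1) ^ (s + 1) * (X : ℤ⟦X⟧) ^ (s + 1) ^ 2) atTop
      (𝓝 altTheta) := by
  have pair (k : ℕ) : C ((k : ℤ).negOnePow : ℤ) * X ^ (k : ℤ).natAbs ^ 2 +
      C ((-k : ℤ).negOnePow : ℤ) * X ^ (-k : ℤ).natAbs ^ 2 =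
        2 * ((-1) ^ k * (X : ℤ⟦X⟧) ^ k ^ 2) := by
    simp [two_mul]
  have partial_sums := (hasSum_altTheta.nat_add_neg.tendsto_sum_nat.comp
    (tendsto_add_atTop_nat 1)).sub_const 1
  simp only [pair, Function.comp_def, sum_range_succ'] at partial_sums
  convert! partial_sums using 2 with n
  · simp only [mul_sum, pow_zero, ne_eq, OfNat.ofNat_ne_zero, not_false_eq_true, zero_pow, mul_one]
    ring
  · simp

theorem overpartitionSeries_true_mul_altTheta :
    overpartitionSeries (fun _ ↦ True) * altTheta = 1 := by
  have tendsto_prod_one_sub :=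
    (WithPiTopology.multipliable_one_sub_X_pow ℤ).hasProd.tendsto_prod_nat
  have tendsto_prod_one_add : Tendsto (fun n ↦ ∏ i ∈ range n, (1 + (X : ℤ⟦X⟧) ^ (i + 1))) atTop
      (𝓝 (overpartitionSeries (fun _ ↦ True) * ∏' i, (1 - X ^ (i + 1)))) := by
    refine ((hasProd_overpartitionSeries fun _ ↦ True).tendsto_prod_nat.mul
      tendsto_prod_one_sub).congr fun n ↦ ?_
    simp [← prod_mul_distrib, overpartitionFactor_mul_one_sub]
  have tendsto_remainder : Tendsto
      (fun n ↦ 2 * ∑ s ∈ range n, shanksTerm (X : ℤ⟦X⟧) n s) atTop (𝓝 0) :=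
    tendsto_zero_of_X_pow_dvd fun n ↦
      (((pow_dvd_pow X n.le_succ).trans (pow_dvd_sum_shanksTerm X n))).mul_left 2
  have limit := tendsto_nhds_unique (tendsto_prod_one_add.mul tendsto_sum_altTheta) <| by
    simpa only [prod_one_add_pow_mul_sum_neg_one_pow_mul_pow_sq] using
      tendsto_prod_one_sub.add tendsto_remainder
  refine mul_right_cancel₀ (WithPiTopology.tprod_one_sub_X_pow_ne_zero ℤ) ?_
  linear_combination limit

end GaussIdentity

section ThetaIdentities

instance charZero_powerSeries {R : Type*} [Semiring R] [CharZero R] : CharZero R⟦X⟧ :=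
  charZero_of_injective_ringHom (C_injective (R := R))

lemma hasSum_rescale_neg_one_altTheta :
    HasSum (fun k : ℤ ↦ C 1 * X ^ k.natAbs ^ 2) (rescale (-1) altTheta) := by
  convert! hasSum_altTheta.map (rescale (-1)) (continuous_rescale (-1)) using 1
  ext1 k
  have sign : (k.negOnePow : ℤ) * (-1) ^ k.natAbs ^ 2 = 1 := by
    rcases k.even_or_odd with hk | hk
    · simp [Int.negOnePow_even k hk, hk.natAbs.pow_of_ne_zero two_ne_zero |>.neg_one_pow]
    · simp [Int.negOnePow_odd k hk, hk.natAbs.pow.neg_one_pow]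
  ext n
  rw [Function.comp_apply, coeff_rescale, coeff_C_mul_X_pow, coeff_C_mul_X_pow]
  split_ifs with h
  · rw [h, mul_comm, sign]
  · rw [mul_zero]

lemma hasSum_two_mul_altTheta_mul_rescale_neg_one :
    HasSum (fun z : ℤ × ℤ ↦ C ((z.1.negOnePow : ℤ) + z.2.negOnePow) *
      X ^ (z.1.natAbs ^ 2 + z.2.natAbs ^ 2)) (2 * (altTheta * rescale (-1) altTheta)) := by
  have product := hasSum_C_mul_X_pow_mul tendsto_natAbs_sq_cofinite tendsto_natAbs_sq_cofinite
    hasSum_altTheta hasSum_rescale_neg_one_altTheta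
  rw [two_mul]
  convert! product.add ((Equiv.prodComm ℤ ℤ).hasSum_iff.2 product) using 1
  ext1 z
  simp [add_mul, add_comm]

lemma hasSum_comp_add_sub_iff {M : Type*} [AddCommMonoid M] [TopologicalSpace M]
    {f : ℤ × ℤ → M} {a : M} (hf : ∀ z, Odd (z.1 + z.2) → f z = 0) :
    HasSum (fun z : ℤ × ℤ ↦ f (z.1 + z.2, z.1 - z.2)) a ↔ HasSum f a := by
  have injective : Function.Injective fun z : ℤ × ℤ ↦ (z.1 + z.2, z.1 - z.2) :=
    fun z w h ↦ by grind
  refine injective.hasSum_iff fun z hz ↦ hf z (Int.not_even_iff_odd.1 fun ⟨u, hu⟩ ↦ hz ?_)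
  exact ⟨(u, z.1 - u), by ext <;> grind⟩

lemma negOnePow_add_negOnePow_eq_zero {a b : ℤ} (h : Odd (a + b)) :
    (a.negOnePow : ℤ) + b.negOnePow = 0 := by
  obtain ⟨k, hk⟩ := h
  rw [eq_sub_of_add_eq hk]
  simp [Int.negOnePow_sub, Int.negOnePow_add]

theorem altTheta_mul_rescale_neg_one :
    altTheta * rescale (-1) altTheta = expand 2 two_ne_zero altTheta ^ 2 := by
  have square := ((hasSum_C_mul_X_pow_mul tendsto_natAbs_sq_cofinite tendsto_natAbs_sq_cofinite
    hasSum_altTheta hasSum_altTheta).map (expand 2 two_ne_zero)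
    (continuous_expand 2 two_ne_zero)).mul_left 2
  have rotated := (hasSum_comp_add_sub_iff fun z hz ↦ by
    rw [negOnePow_add_negOnePow_eq_zero hz, map_zero, zero_mul]).2
      hasSum_two_mul_altTheta_mul_rescale_neg_one
  refine mul_left_cancel₀ (two_ne_zero' ℤ⟦X⟧) (rotated.unique ?_)
  convert! square using 1
  · ext1 z
    have exponent : (z.1 + z.2).natAbs ^ 2 + (z.1 - z.2).natAbs ^ 2 =
        2 * (z.1.natAbs ^ 2 + z.2.natAbs ^ 2) := by
      zify
      simp only [sq_abs]
      ring
    have sign : ((z.1 + z.2).negOnePow : ℤ) + (z.1 - z.2).negOnePow =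
        2 * (z.1.negOnePow * z.2.negOnePow) := by
      simp [Int.negOnePow_add, Int.negOnePow_sub, two_mul]
    simp only [Function.comp_apply, exponent, sign, map_mul, map_pow, map_ofNat, expand_X,
      expand_C, pow_mul, mul_assoc]
  · rw [map_mul, sq]

/-- The series `∑ (-1) ^ j q ^ ((3 * j + 1) ^ 2)` over all integers `j`, which collects, up to the
factor `-2`, the exponents of `altTheta` that are not divisible by `3`. -/
noncomputable def altThetaThird : ℤ⟦X⟧ :=
  ∑' j : ℤ, C (j.negOnePow : ℤ) * X ^ (3 * j + 1).natAbs ^ 2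

lemma hasSum_altThetaThird :
    HasSum (fun j : ℤ ↦ C (j.negOnePow : ℤ) * X ^ (3 * j + 1).natAbs ^ 2) altThetaThird := by
  have injective : Function.Injective fun j : ℤ ↦ 3 * j + 1 := fun i j h ↦ by grind
  exact (summable_C_mul_X_pow _
    (tendsto_natAbs_sq_cofinite.comp injective.tendsto_cofinite)).hasSum

lemma eq_sum_residues_of_hasSum {M : Type*} [AddCommMonoid M] [TopologicalSpace M]
    [ContinuousAdd M] [T3Space M] {n : ℕ} [NeZero n] {f : ℤ → M} {a : M} (hf : HasSum f a)
    {g : Fin n → M} (hg : ∀ r : Fin n, HasSum (fun j : ℤ ↦ f (j * n + r)) (g r)) :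
    a = ∑ r, g r :=
  ((((Int.divModEquiv n).trans (Equiv.prodComm _ _)).symm.hasSum_iff.2 hf).prod_fiberwise
    hg).unique (hasSum_fintype g)

theorem altTheta_eq_expand_sub :
    altTheta = expand 9 (by norm_num) altTheta - 2 * altThetaThird := by
  have residue_zero := hasSum_altTheta.map (expand 9 (by norm_num)) (continuous_expand 9 _)
  have residue_one := hasSum_altThetaThird.neg
  have residue_two := (Equiv.subLeft (-1 : ℤ)).hasSum_iff.2 hasSum_altThetaThird.neg
  suffices by_residue : altTheta = ∑ r : Fin 3,
      ![expand 9 (by norm_num) altTheta, -altThetaThird, -altThetaThird] r by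
    simp only [Fin.sum_univ_three, Matrix.cons_val] at by_residue
    linear_combination by_residue
  refine eq_sum_residues_of_hasSum hasSum_altTheta fun r ↦ ?_
  have sign (j : ℤ) : (j * 3).negOnePow = j.negOnePow := by
    rw [show j * 3 = 2 * j + j by ring, Int.negOnePow_add, Int.negOnePow_two_mul, one_mul]
  fin_cases r
  · convert! residue_zero using 1
    ext1 j
    have exponent : (j * 3).natAbs ^ 2 = 9 * j.natAbs ^ 2 := by rw [Int.natAbs_mul]; ring
    simp [-Int.coe_negOnePow, exponent, sign, pow_mul]
  · convert! residue_one using 1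
    ext1 j
    simp [-Int.coe_negOnePow, mul_comm 3 j, sign, Int.negOnePow_add]
  · convert! residue_two using 1
    ext1 j
    have exponent : (j * 3 + 2).natAbs ^ 2 = (3 * (-1 - j) + 1).natAbs ^ 2 := by
      zify
      simp only [sq_abs]
      ring
    simp [-Int.coe_negOnePow, exponent, sign, Int.negOnePow_add, Int.negOnePow_sub,
      Int.negOnePow_even 2 even_two]

end ThetaIdentities

section ExponentClass

/-- The power series whose exponents all lie in the residue class `r` modulo `m`. -/
def exponentClass (R : Type*) [Semiring R] (m : ℕ) (r : ZMod m) : Submodule R R⟦X⟧ where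
  carrier := {f | ∀ n : ℕ, (n : ZMod m) ≠ r → coeff n f = 0}
  add_mem' hf hg n hn := by simp [hf n hn, hg n hn]
  zero_mem' := by simp
  smul_mem' c f hf n hn := by simp [hf n hn]

variable {R : Type*}

instance exponentClass.gradedMonoid [CommSemiring R] (m : ℕ) :
    SetLike.GradedMonoid (exponentClass R m) where
  one_mem n hn := by
    rw [coeff_one, if_neg (by rintro rfl; simp at hn)]
  mul_mem i j f g hf hg n hn := by
    rw [coeff_mul]
    refine Finset.sum_eq_zero fun ab hab ↦ ?_
    by_cases h : (ab.1 : ZMod m) = i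
    · rw [hg, mul_zero]
      rintro rfl
      exact hn (by rw [← h, ← mem_antidiagonal.1 hab, Nat.cast_add])
    · rw [hf _ h, zero_mul]

lemma eq_zero_of_mem_exponentClass [Semiring R] {m : ℕ} {i j : ZMod m} (hij : i ≠ j) {f : R⟦X⟧}
    (hi : f ∈ exponentClass R m i) (hj : f ∈ exponentClass R m j) : f = 0 := by
  ext n
  by_cases h : (n : ZMod m) = i
  · exact hj n (h ▸ hij)
  · exact hi n h

lemma coeff_eq_zero_of_mem_exponentClass [Semiring R] {m n : ℕ} {r : ZMod m} (hr : r ≠ 0)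
    (hmn : m ∣ n) {f : R⟦X⟧} (hf : f ∈ exponentClass R m r) : coeff n f = 0 :=
  hf n (by rw [(ZMod.natCast_eq_zero_iff n m).2 hmn]; exact hr.symm)

lemma expand_mem_exponentClass [CommRing R] {m : ℕ} {r : ZMod m} {f : R⟦X⟧} {p : ℕ} (hp : p ≠ 0)
    (hf : f ∈ exponentClass R m r) : expand p hp f ∈ exponentClass R m (p * r) := by
  intro n hn
  rw [coeff_expand]
  split_ifs with h
  · obtain ⟨k, rfl⟩ := h
    rw [Nat.mul_div_cancel_left k (Nat.pos_of_ne_zero hp)]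
    exact hf k (by rintro rfl; exact hn (Nat.cast_mul p k))
  · rfl

lemma expand_mem_exponentClass_zero [CommRing R] {m p : ℕ} (hp : p ≠ 0) (h : m ∣ p) (f : R⟦X⟧) :
    expand p hp f ∈ exponentClass R m 0 := by
  intro n hn
  refine coeff_expand_of_not_dvd p hp f fun hpn ↦ hn ?_
  exact (ZMod.natCast_eq_zero_iff n m).2 (h.trans hpn)

lemma rescale_neg_one_mem_exponentClass [CommRing R] {m : ℕ} {r : ZMod m} {f : R⟦X⟧}
    (hf : f ∈ exponentClass R m r) : rescale (-1) f ∈ exponentClass R m r := fun n hn ↦ by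
  rw [coeff_rescale, hf n hn, mul_zero]

lemma mem_exponentClass_one_of_rescale_neg_one_eq_neg [CommRing R] [IsAddTorsionFree R]
    {f : R⟦X⟧} (hf : rescale (-1) f = -f) : f ∈ exponentClass R 2 1 := fun n hn ↦ by
  have n_even : Even n :=
    Nat.not_odd_iff_even.1 fun h ↦ hn (ZMod.natCast_eq_one_iff_odd.2 h)
  have coeff_eq := congrArg (coeff n) hf
  rw [coeff_rescale, n_even.neg_one_pow, one_mul, map_neg] at coeff_eq
  exact self_eq_neg.1 coeff_eq

lemma altThetaThird_mem_exponentClass : altThetaThird ∈ exponentClass ℤ 3 1 := fun n hn ↦ by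
  have coeff_sum := (WithPiTopology.hasSum_iff_hasSum_coeff ℤ).1 hasSum_altThetaThird n
  refine coeff_sum.unique ?_
  convert! hasSum_zero with j
  rw [coeff_C_mul_X_pow, if_neg]
  rintro rfl
  refine hn ?_
  have cast_sq : (((3 * j + 1).natAbs ^ 2 : ℕ) : ZMod 3) = ((3 * j + 1) ^ 2 : ℤ) := by
    rw [← Int.natAbs_sq]
    norm_cast
  rw [cast_sq]
  push_cast
  rw [show (3 : ZMod 3) = 0 from rfl, zero_mul, zero_add, one_pow]

end ExponentClass

section FunctionalEquation

variable {R : Type*} [CommRing R]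

lemma expand_comm {p q : ℕ} (hp : p ≠ 0) (hq : q ≠ 0) (f : R⟦X⟧) :
    expand p hp (expand q hq f) = expand q hq (expand p hp f) := by
  simp only [← expand_mul, mul_comm]

lemma rescale_neg_one_expand_of_odd {p : ℕ} (hp : Odd p) (f : R⟦X⟧) :
    rescale (-1) (expand p hp.pos.ne' f) = expand p hp.pos.ne' (rescale (-1) f) := by
  ext n
  simp only [coeff_rescale, coeff_expand]
  split_ifs with h
  · obtain ⟨k, rfl⟩ := h
    rw [Nat.mul_div_cancel_left k hp.pos, pow_mul, hp.neg_one_pow]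
  · rw [mul_zero]

lemma rescale_neg_one_expand_of_even {p : ℕ} (hp : p ≠ 0) (even : Even p) (f : R⟦X⟧) :
    rescale (-1) (expand p hp f) = expand p hp f := by
  ext n
  simp only [coeff_rescale, coeff_expand]
  split_ifs with h
  · rw [(even.trans_dvd h).neg_one_pow, one_mul]
  · rw [mul_zero]

/-- The series `s` for which `φ(-q) = φ(-q ^ 9) * (1 - 2 * s)`; as `φ(-q) ⁻¹` is the generating
function of all overpartitions, no division is needed. -/
noncomputable def thirdRatio : ℤ⟦X⟧ :=
  altThetaThird * expand 9 (by norm_num) (overpartitionSeries fun _ ↦ True)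

theorem altTheta_eq_expand_mul :
    altTheta = expand 9 (by norm_num) altTheta * (1 - 2 * thirdRatio) := by
  have inverse := congrArg (expand 9 (by norm_num)) overpartitionSeries_true_mul_altTheta
  rw [map_mul, map_one] at inverse
  rw [thirdRatio]
  linear_combination altTheta_eq_expand_sub + 2 * altThetaThird * inverse

lemma thirdRatio_mem_exponentClass : thirdRatio ∈ exponentClass ℤ 3 1 := by
  rw [thirdRatio, ← add_zero (1 : ZMod 3)]
  exact SetLike.mul_mem_graded altThetaThird_mem_exponentClass
    (expand_mem_exponentClass_zero (by norm_num) (by norm_num : 3 ∣ 9) _)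

lemma isUnit_altTheta : IsUnit altTheta :=
  .of_mul_eq_one_right _ overpartitionSeries_true_mul_altTheta

theorem one_sub_thirdRatio_mul_rescale_neg_one :
    (1 - 2 * thirdRatio) * (1 - 2 * rescale (-1) thirdRatio) =
      (1 - 2 * expand 2 two_ne_zero thirdRatio) ^ 2 := by
  have dilated := congrArg (expand 9 (by norm_num)) altTheta_mul_rescale_neg_one
  have product := altTheta_mul_rescale_neg_one
  rw [altTheta_eq_expand_mul] at product
  simp only [map_mul, map_sub, map_one, map_ofNat, map_pow] at product dilated
  rw [rescale_neg_one_expand_of_odd (by decide : Odd 9), expand_comm two_ne_zero] at product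
  refine (((isUnit_altTheta.map (expand 2 two_ne_zero)).map
    (expand 9 (by norm_num))).pow 2).mul_left_cancel ?_
  linear_combination product - (1 - 2 * thirdRatio) * (1 - 2 * rescale (-1) thirdRatio) * dilated

lemma expand_two_thirdRatio_mem_exponentClass :
    expand 2 two_ne_zero thirdRatio ∈ exponentClass ℤ 3 2 :=
  expand_mem_exponentClass two_ne_zero thirdRatio_mem_exponentClass

theorem thirdRatio_add_and_mul_rescale_neg_one :
    thirdRatio + rescale (-1) thirdRatio = -2 * expand 2 two_ne_zero thirdRatio ^ 2 ∧
      thirdRatio * rescale (-1) thirdRatio = -expand 2 two_ne_zero thirdRatio := by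
  have product := one_sub_thirdRatio_mul_rescale_neg_one
  have s_mem := thirdRatio_mem_exponentClass
  have r_mem := expand_two_thirdRatio_mem_exponentClass
  set s := thirdRatio
  set s' := rescale (-1) s
  set r := expand 2 two_ne_zero s
  have s'_mem : s' ∈ exponentClass ℤ 3 1 := rescale_neg_one_mem_exponentClass s_mem
  have sum_mem : s + s' + 2 * r ^ 2 ∈ exponentClass ℤ 3 1 := by
    rw [two_mul]
    have : r ^ 2 ∈ exponentClass ℤ 3 1 := SetLike.pow_mem_graded 2 r_mem
    exact add_mem (add_mem s_mem s'_mem) (add_mem this this)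
  have product_mem : s * s' + r ∈ exponentClass ℤ 3 2 :=
    add_mem (SetLike.mul_mem_graded s_mem s'_mem) r_mem
  have balance : s + s' + 2 * r ^ 2 = 2 * (s * s' + r) :=
    mul_left_cancel₀ (two_ne_zero' ℤ⟦X⟧) (by linear_combination -product)
  have sum_eq_zero : s + s' + 2 * r ^ 2 = 0 :=
    eq_zero_of_mem_exponentClass (by decide : (1 : ZMod 3) ≠ 2) sum_mem
      (by rw [balance, two_mul]; exact add_mem product_mem product_mem)
  have product_eq_zero : s * s' + r = 0 := by simpa [sum_eq_zero] using balance
  exact ⟨by linear_combination sum_eq_zero, by linear_combination product_eq_zero⟩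

theorem thirdRatio_functional_equation :
    thirdRatio ^ 2 + 2 * thirdRatio * expand 2 two_ne_zero thirdRatio ^ 2 =
      expand 2 two_ne_zero thirdRatio := by
  obtain ⟨sum, product⟩ := thirdRatio_add_and_mul_rescale_neg_one
  linear_combination thirdRatio * sum - product

theorem thirdRatio_add_sq_mem_exponentClass :
    thirdRatio + expand 2 two_ne_zero thirdRatio ^ 2 ∈ exponentClass ℤ 2 1 := by
  refine mem_exponentClass_one_of_rescale_neg_one_eq_neg ?_
  rw [map_add, map_pow, rescale_neg_one_expand_of_even two_ne_zero even_two]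
  linear_combination thirdRatio_add_and_mul_rescale_neg_one.1

end FunctionalEquation

section Congruence

theorem mk_Rbar_mul_altTheta {ℓ μ : ℕ} (hℓ : ℓ ≠ 0) (hμ : μ ≠ 0) (h : ℓ.Coprime μ) :
    PowerSeries.mk (fun n ↦ (Rbar ℓ μ n : ℤ)) *
        (altTheta * expand (ℓ * μ) (mul_ne_zero hℓ hμ) altTheta) =
      expand ℓ hℓ altTheta * expand μ hμ altTheta := by
  have inverse {d : ℕ} (hd : d ≠ 0) :
      overpartitionSeries (d ∣ ·) * expand d hd altTheta = 1 := by
    rw [overpartitionSeries_dvd hd, ← map_mul, overpartitionSeries_true_mul_altTheta, map_one]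
  have product := overpartitionSeries_not_dvd_and_not_dvd h
  rw [mk_Rbar]
  generalize overpartitionSeries (fun i ↦ ¬ ℓ ∣ i ∧ ¬ μ ∣ i) = F at product ⊢
  set f := altTheta
  set fℓ := expand ℓ hℓ f
  set fμ := expand μ hμ f
  set fℓμ := expand (ℓ * μ) (mul_ne_zero hℓ hμ) f
  linear_combination fℓ * fμ * f * fℓμ * product
    - F * f * fℓμ * (overpartitionSeries (μ ∣ ·) * fμ * inverse hℓ + inverse hμ)
    + fℓ * fμ * (overpartitionSeries (ℓ * μ ∣ ·) * fℓμ * overpartitionSeries_true_mul_altTheta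
      + inverse (mul_ne_zero hℓ hμ))

theorem mk_Rbar_four_nine_mul_one_sub :
    PowerSeries.mk (fun n ↦ (Rbar 4 9 n : ℤ)) * (1 - 2 * thirdRatio) =
      1 - 2 * expand 2 two_ne_zero (expand 2 two_ne_zero thirdRatio) := by
  have product := mk_Rbar_mul_altTheta four_ne_zero (by norm_num : 9 ≠ 0) (by norm_num)
  have dilated := congrArg (expand 4 four_ne_zero) altTheta_eq_expand_mul
  simp only [map_mul, map_sub, map_one, map_ofNat, ← expand_mul] at dilated
  simp only [← expand_mul]
  refine ((isUnit_altTheta.map (expand 9 (by norm_num))).mul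
    (isUnit_altTheta.map (expand (4 * 9) (by norm_num)))).mul_left_cancel ?_
  linear_combination product -
    PowerSeries.mk (fun n ↦ (Rbar 4 9 n : ℤ)) * expand (4 * 9) (by norm_num) altTheta *
      altTheta_eq_expand_mul + expand 9 (by norm_num) altTheta * dilated

theorem eq_of_mul_one_sub_two_mul_eq {R : Type*} [CommRing R] {F s r t : R}
    (hF : F * (1 - 2 * s) = 1 - 2 * t) (hs : s ^ 2 + 2 * s * r ^ 2 = r)
    (hr : r ^ 2 + 2 * r * t ^ 2 = t) :
    F = 1 + 2 • (s - t) + 4 • (s * (s - t)) + 8 • ((s + r ^ 2) * (r + 2 * (r ^ 2 * t))) +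
      16 • (s ^ 3 * (s - t)) +
      32 • (F * s ^ 5 - t * s ^ 4 + (s * r ^ 4 - r ^ 3 - r ^ 4 * t - r ^ 3 * t ^ 3)) := by
  have geometric : F = 1 + 2 * (s - t) + 4 * (s * (s - t)) + 8 * (s ^ 2 * (s - t)) +
      16 * (s ^ 3 * (s - t)) + 32 * (F * s ^ 5 - t * s ^ 4) := by
    linear_combination (1 + 2 * s + 4 * s ^ 2 + 8 * s ^ 3 + 16 * s ^ 4) * hF
  have cubic : s ^ 2 * (s - t) = (s + r ^ 2) * (r + 2 * (r ^ 2 * t)) +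
      4 * (s * r ^ 4 - r ^ 3 - r ^ 4 * t - r ^ 3 * t ^ 3) := by
    linear_combination (s - t - 2 * r ^ 2) * hs + (r + 2 * r ^ 2 * t) * hr
  linear_combination geometric + 8 * cubic

theorem dvd_coeff_six_mul_mk_Rbar {m : ℕ} (hm : m ≠ 0) :
    32 ∣ coeff (6 * m) (PowerSeries.mk fun n ↦ (Rbar 4 9 n : ℤ)) := by
  have functional := thirdRatio_functional_equation
  have functional_dilated := congrArg (expand 2 two_ne_zero) functional
  simp only [map_add, map_mul, map_pow, map_ofNat] at functional_dilated
  have expansion := eq_of_mul_one_sub_two_mul_eq mk_Rbar_four_nine_mul_one_sub functional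
    functional_dilated
  have s_mem := thirdRatio_mem_exponentClass
  have r_mem := expand_two_thirdRatio_mem_exponentClass
  have odd_mem := thirdRatio_add_sq_mem_exponentClass
  have even_mem := expand_mem_exponentClass_zero two_ne_zero dvd_rfl
    (thirdRatio + 2 * (thirdRatio ^ 2 * expand 2 two_ne_zero thirdRatio))
  simp only [map_add, map_mul, map_pow, map_ofNat] at even_mem
  have t_mem : expand 2 two_ne_zero (expand 2 two_ne_zero thirdRatio) ∈ exponentClass ℤ 3 1 :=
    expand_mem_exponentClass two_ne_zero r_mem
  set s := thirdRatio
  set r := expand 2 two_ne_zero s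
  set t := expand 2 two_ne_zero r
  have sub_mem : s - t ∈ exponentClass ℤ 3 1 := sub_mem s_mem t_mem
  have vanish_three {f : ℤ⟦X⟧} {c : ZMod 3} (hc : c ≠ 0) (hf : f ∈ exponentClass ℤ 3 c) :
      coeff (6 * m) f = 0 := coeff_eq_zero_of_mem_exponentClass hc (by lia) hf
  have linear := vanish_three (by decide) sub_mem
  have quadratic := vanish_three (by decide) (SetLike.mul_mem_graded s_mem sub_mem)
  have quartic := vanish_three (by decide)
    (SetLike.mul_mem_graded (SetLike.pow_mem_graded 3 s_mem) sub_mem)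
  have cubic := coeff_eq_zero_of_mem_exponentClass (by decide) (by lia : 2 ∣ 6 * m)
    (SetLike.mul_mem_graded odd_mem even_mem)
  rw [expansion]
  simp only [map_add, map_nsmul, coeff_one, linear, quadratic, cubic, quartic]
  simp [hm]

end Congruence

end RegularOverpartition

theorem Rbar_four_nine_18n_12_mod_32_general {m : ℕ} (hm : m ≠ 0) :
    Rbar 4 9 (6 * m) ≡ 0 [MOD 32] := by
  have dvd := RegularOverpartition.dvd_coeff_six_mul_mk_Rbar hm
  rw [PowerSeries.coeff_mk] at dvd
  exact Nat.modEq_zero_iff_dvd.2 (by exact_mod_cast dvd)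

theorem Rbar_four_nine_18n_12_mod_32 (n : ℕ) :
    Rbar 4 9 (18 * n + 12) ≡ 0 [MOD 32] := by
  rw [show 18 * n + 12 = 6 * (3 * n + 2) by ring]
  exact Rbar_four_nine_18n_12_mod_32_general (by lia)
end

section
/- For all integers n ≥ 0, the number of (4,9)-regular overpartitions satisfies R̄_{4,9}(18n+15) ≡ 0 (mod 16). -/
/-!
Write `θ_d = ∑_{j ≥ 1} (-1)ʲ q^{d j²}`. Inclusion–exclusion over the multiples of `ℓ`, `μ` and
`lcm ℓ μ`, together with Gauss's identity `∏ (1 - qⁿ) / (1 + qⁿ) = 1 + 2 θ₁` (a limit of a finite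
identity of Shanks), shows that the generating function `G` of `Rbar ℓ μ` satisfies
`G (1 + 2 θ₁) (1 + 2 θ_lcm) = (1 + 2 θ_ℓ) (1 + 2 θ_μ)`. Hence modulo 16 it is a main term plus
`8 θ₁² (θ_ℓ - θ₁)`.

If `9 ∣ μ` and `ℓ ≡ 1 (mod 3)`, the exponents of the main term are sums of at most two squares
modulo 9, so none of them is `≡ 6 (mod 9)`. At the exponent `18 n + 15` only the parity of the
coefficient of `θ₁² (θ_ℓ - θ₁)` remains. Modulo 2 one has `θ₁² = θ₂`, which reduces it to counting
the positive solutions of `2 x² + ℓ z² = 18 n + 15` and of `2 x² + z² = 18 n + 15`: for even `ℓ` the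
former has none, and those of the latter are paired off by a reflection of the form `2 x² + z²`.
-/

open Finset PowerSeries
open scoped Pointwise

variable {R : Type*} [CommRing R]

section Shanks

/-- The summand, up to the factor `(-1) ^ s * (x ^ (n + 1)) ^ s`, of Shanks's finite form of Gauss's
identity. Shanks's quotient of products is cleared of denominators, so that the identity makes sense
in every commutative ring. -/
def shanksTerm (x : R) (n s : ℕ) : R :=
  (∏ k ∈ range s, (1 + x ^ k)) * ∏ k ∈ Ico (s + 1) (n + 1), (1 - x ^ k)

lemma shanksTerm_zero (x : R) (n : ℕ) :
    shanksTerm x n 0 = ∏ k ∈ range n, (1 - x ^ (k + 1)) := by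
  simp [shanksTerm, prod_Ico_eq_prod_range, add_comm]

lemma shanksTerm_self (x : R) (n : ℕ) : shanksTerm x n n = ∏ k ∈ range n, (1 + x ^ k) := by
  simp [shanksTerm]

lemma shanksTerm_succ_left (x : R) {n s : ℕ} (h : s ≤ n) :
    shanksTerm x (n + 1) s = (1 - x ^ (n + 1)) * shanksTerm x n s := by
  rw [shanksTerm, shanksTerm, prod_Ico_succ_top (by lia)]
  ring

lemma sum_shanksTerm_telescope (x y : R) (n : ℕ) :
    ∑ s ∈ range (n + 1), (-1) ^ s * shanksTerm x n s * y ^ s * ((1 - y) * x ^ s - (1 + y)) =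
      (-1) ^ (n + 1) * y ^ (n + 1) * ∏ k ∈ range (n + 1), (1 + x ^ k) := by
  let U (s : ℕ) : R :=
    (-y) ^ s * ((∏ k ∈ range s, (1 + x ^ k)) * ∏ k ∈ Ico s (n + 1), (1 - x ^ k))
  have term_eq : ∀ s ∈ range (n + 1),
      (-1) ^ s * shanksTerm x n s * y ^ s * ((1 - y) * x ^ s - (1 + y)) = U (s + 1) - U s := by
    intro s hs
    simp only [U, shanksTerm]
    rw [prod_range_succ, prod_eq_prod_Ico_succ_bot (mem_range.mp hs), neg_pow y, neg_pow y]
    ring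
  have U_zero : U 0 = 0 := by
    simp [U, prod_range_succ']
  rw [sum_congr rfl term_eq, sum_range_sub, U_zero]
  simp [U, neg_pow y]

theorem shanks_identity (x : R) (n : ℕ) :
    (∏ k ∈ range n, (1 + x ^ (k + 1))) * (1 + 2 * ∑ j ∈ Icc 1 n, (-1) ^ j * x ^ j ^ 2) =
      ∑ s ∈ range (n + 1), (-1) ^ s * shanksTerm x n s * (x ^ (n + 1)) ^ s := by
  induction n with
  | zero => simp [shanksTerm]
  | succ n ih =>
    have diff : ∑ s ∈ range (n + 1), (-1) ^ s * shanksTerm x (n + 1) s * (x ^ (n + 1 + 1)) ^ s -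
        (1 + x ^ (n + 1)) * ∑ s ∈ range (n + 1), (-1) ^ s * shanksTerm x n s * (x ^ (n + 1)) ^ s =
        (-1) ^ (n + 1) * (x ^ (n + 1)) ^ (n + 1) * ∏ k ∈ range (n + 1), (1 + x ^ k) := by
      rw [← sum_shanksTerm_telescope, mul_sum, ← sum_sub_distrib]
      refine sum_congr rfl fun s hs ↦ ?_
      rw [shanksTerm_succ_left x (mem_range_succ_iff.mp hs)]
      ring
    have prod_two : ∏ k ∈ range (n + 1), (1 + x ^ k) = 2 * ∏ k ∈ range n, (1 + x ^ (k + 1)) := by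
      rw [prod_range_succ']
      ring
    rw [prod_two] at diff
    rw [sum_range_succ _ (n + 1), shanksTerm_self, prod_two, prod_range_succ,
      sum_Icc_succ_top (by lia)]
    linear_combination (1 + x ^ (n + 1)) * ih - diff

end Shanks

section Theta

variable (R) in
/-- The series `∑_{j ≥ 1} (-1)ʲ q^{d j²}`, half of the nonconstant part of the theta function
`∑_{j ∈ ℤ} (-1)ʲ q^{d j²}`. Coefficients are sums over `j ≤ m`, which misses nothing for `d ≠ 0`;
for `d = 0` the series is `0`. -/
def thetaTail (d : ℕ) : R⟦X⟧ :=
  PowerSeries.mk fun m ↦ ∑ j ∈ Icc 1 m with d * j ^ 2 = m, (-1) ^ j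

lemma coeff_thetaTail_eq_sum {d m n : ℕ} (hd : d ≠ 0) (hmn : m ≤ n) :
    coeff m (thetaTail R d) = ∑ j ∈ Icc 1 n with d * j ^ 2 = m, (-1) ^ j := by
  rw [thetaTail, coeff_mk]
  congr 1
  ext j
  simp only [mem_filter, mem_Icc, and_congr_left_iff]
  rintro rfl
  have : j ≤ d * j ^ 2 := (Nat.le_self_pow two_ne_zero j).trans (Nat.le_mul_of_pos_left _ (by lia))
  lia

lemma thetaTail_zero : thetaTail R 0 = 0 := by
  ext m
  rw [thetaTail, coeff_mk, map_zero]
  refine sum_eq_zero fun j hj ↦ ?_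
  simp only [mem_filter, mem_Icc] at hj
  lia

lemma map_thetaTail {S : Type*} [CommRing S] (f : R →+* S) (d : ℕ) :
    map f (thetaTail R d) = thetaTail S d := by
  ext m
  simp [thetaTail]

lemma expand_thetaTail {k d : ℕ} (hk : k ≠ 0) (hd : d ≠ 0) :
    (thetaTail R d).expand k hk = thetaTail R (k * d) := by
  ext m
  rw [coeff_expand]
  split_ifs with hkm
  · obtain ⟨m, rfl⟩ := hkm
    have hk_pos : 0 < k := Nat.pos_of_ne_zero hk
    rw [Nat.mul_div_cancel_left _ hk_pos,
      coeff_thetaTail_eq_sum hd (Nat.le_mul_of_pos_left m hk_pos), thetaTail, coeff_mk]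
    simp [mul_assoc, hk]
  · rw [thetaTail, coeff_mk, sum_eq_zero]
    rintro j hj
    exact absurd ⟨d * j ^ 2, by rw [← (mem_filter.mp hj).2, mul_assoc]⟩ hkm

lemma thetaTail_sq_of_charP_two [CharP R 2] {d : ℕ} (hd : d ≠ 0) :
    thetaTail R d ^ 2 = thetaTail R (2 * d) := by
  have : ExpChar R 2 := ExpChar.prime Nat.prime_two
  calc thetaTail R d ^ 2
    _ = map (frobenius R 2) ((thetaTail R d).expand 2 two_ne_zero) :=
      (MvPowerSeries.map_frobenius_expand 2 two_ne_zero).symm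
    _ = thetaTail R (2 * d) := by rw [expand_thetaTail two_ne_zero hd, map_thetaTail]

end Theta

section Products

open scoped WithPiTopology
open Filter Topology

variable [TopologicalSpace R]

lemma tendsto_of_X_pow_dvd_sub {f : ℕ → R⟦X⟧} {g : R⟦X⟧} (h : ∀ n, X ^ n ∣ f n - g) :
    Tendsto f atTop (𝓝 g) := by
  rw [WithPiTopology.tendsto_iff_coeff_tendsto]
  intro m
  refine tendsto_atTop_of_eventually_const (i₀ := m + 1) fun n hn ↦ ?_
  simpa [sub_eq_zero] using X_pow_dvd_iff.mp (h n) m hn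

lemma tendsto_sum_thetaTail {d : ℕ} (hd : d ≠ 0) :
    Tendsto (fun n ↦ ∑ j ∈ Icc 1 n, (-1) ^ j * ((X : R⟦X⟧) ^ d) ^ j ^ 2) atTop
      (𝓝 (thetaTail R d)) := by
  refine tendsto_of_X_pow_dvd_sub fun n ↦ X_pow_dvd_iff.mpr fun m hm ↦ ?_
  rw [map_sub, sub_eq_zero, coeff_thetaTail_eq_sum hd hm.le, map_sum, sum_filter]
  refine sum_congr rfl fun j _ ↦ ?_
  rw [← pow_mul, ← map_one C, ← map_neg, ← map_pow, coeff_C_mul, coeff_X_pow]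
  simp [eq_comm]

/-- The Euler product `∏ (1 + ε qⁱ)` over the `i ≥ 1` satisfying `p`, as an infinite product in the
topology of coefficientwise convergence. For `ε = 1` it generates the partitions into distinct parts
satisfying `p`, and for `ε = -1` it is inverse to the generating function of all partitions into
such parts. -/
noncomputable def partProd (ε : R) (p : ℕ → Prop) [DecidablePred p] : R⟦X⟧ :=
  ∏' i : ℕ, if p (i + 1) then 1 + C ε * X ^ (i + 1) else 1

section

variable (ε : R) (p : ℕ → Prop) [DecidablePred p]

lemma multipliable_partProd :
    Multipliable fun i : ℕ ↦ if p (i + 1) then 1 + C ε * (X : R⟦X⟧) ^ (i + 1) else 1 := by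
  have factor_eq (i : ℕ) : (if p (i + 1) then 1 + C ε * (X : R⟦X⟧) ^ (i + 1) else 1) =
      1 + if p (i + 1) then C ε * X ^ (i + 1) else 0 := by
    split_ifs <;> simp
  simp_rw [factor_eq]
  refine WithPiTopology.multipliable_one_add_of_tendsto_order_atTop_nhds_top R
    (ENat.tendsto_nhds_top_iff_natCast_lt.mpr fun n ↦ eventually_atTop.mpr ⟨n, fun i hi ↦ ?_⟩)
  refine lt_of_lt_of_le (Nat.cast_lt.mpr (Nat.lt_succ_of_le hi)) (nat_le_order _ _ fun j hj ↦ ?_)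
  split_ifs
  · rw [coeff_C_mul, coeff_X_pow, if_neg hj.ne, mul_zero]
  · simp

lemma hasProd_partProd :
    HasProd (fun i : ℕ ↦ if p (i + 1) then 1 + C ε * (X : R⟦X⟧) ^ (i + 1) else 1)
      (partProd ε p) :=
  (multipliable_partProd ε p).hasProd

lemma constantCoeff_partProd [T2Space R] : constantCoeff (partProd ε p) = 1 := by
  have h := (hasProd_partProd ε p).map constantCoeff (WithPiTopology.continuous_constantCoeff R)
  refine h.unique ?_
  convert hasProd_one using 2 with i
  dsimp only [Function.comp_apply]
  split_ifs <;> simp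

lemma isUnit_partProd [T2Space R] : IsUnit (partProd ε p) := by
  rw [isUnit_iff_constantCoeff, constantCoeff_partProd]
  exact isUnit_one

lemma mk_card_restricted_distinct [T2Space R] :
    (PowerSeries.mk fun n ↦ (#{x : n.Partition | x.parts.Nodup ∧ ∀ i ∈ x.parts, p i} : R)) =
      partProd 1 p := by
  have factor (i : ℕ) : (1 : R⟦X⟧) + ∑' j, (if j + 1 ≤ 1 ∧ p (i + 1) then (1 : R) else 0) •
      X ^ ((i + 1) * (j + 1)) = if p (i + 1) then 1 + C 1 * X ^ (i + 1) else 1 := by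
    rw [tsum_eq_single 0 fun j hj ↦ by rw [if_neg (by lia)]; exact zero_smul R _]
    split_ifs <;> simp_all
  have genFun := Nat.Partition.genFun_eq_tprod fun i c ↦ if c ≤ 1 ∧ p i then (1 : R) else 0
  simp_rw [factor] at genFun
  rw [partProd, ← genFun]
  ext n
  rw [coeff_mk, Nat.Partition.coeff_genFun, card_filter, Nat.cast_sum]
  refine sum_congr rfl fun x _ ↦ ?_
  rw [Finsupp.prod, prod_boole, Nat.cast_ite, Nat.cast_one, Nat.cast_zero]
  refine if_congr ?_ rfl rfl
  rw [Multiset.nodup_iff_count_le_one]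
  simp only [Multiset.toFinsupp_support, Multiset.mem_toFinset, Multiset.toFinsupp_apply]
  grind [Multiset.count_eq_zero_of_notMem]

end

lemma hasProd_partProd_dvd (ε : R) {d : ℕ} (hd : d ≠ 0) :
    HasProd (fun k ↦ 1 + C ε * (X ^ d : R⟦X⟧) ^ (k + 1)) (partProd ε (d ∣ ·)) := by
  have succ_pred (k : ℕ) : d * (k + 1) - 1 + 1 = d * (k + 1) :=
    Nat.sub_add_cancel (Nat.mul_pos (by lia) k.succ_pos)
  have inj : Function.Injective fun k : ℕ ↦ d * (k + 1) - 1 := by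
    intro a b hab
    have : d * (a + 1) = d * (b + 1) := by
      rw [← succ_pred a, ← succ_pred b]
      exact congrArg (· + 1) hab
    simpa [hd] using this
  have not_dvd (i : ℕ) (hi : i ∉ Set.range fun k ↦ d * (k + 1) - 1) : ¬ d ∣ i + 1 := by
    rintro ⟨c, hc⟩
    have hc0 : c ≠ 0 := right_ne_zero_of_mul (hc.symm.trans_ne i.succ_ne_zero)
    obtain ⟨k, rfl⟩ := Nat.exists_eq_add_one_of_ne_zero hc0
    exact hi ⟨k, Nat.sub_eq_of_eq_add hc.symm⟩
  have h := hasProd_partProd ε (d ∣ ·)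
  rw [← inj.hasProd_iff fun i hi ↦ if_neg (not_dvd i hi)] at h
  simpa only [Function.comp_def, succ_pred, dvd_mul_right, if_true, pow_mul] using h

variable [IsTopologicalRing R]

lemma tendsto_sum_shanksTerm {d : ℕ} (hd : d ≠ 0) :
    Tendsto (fun n ↦ ∑ s ∈ range (n + 1),
      (-1) ^ s * shanksTerm ((X : R⟦X⟧) ^ d) n s * ((X ^ d) ^ (n + 1)) ^ s) atTop
      (𝓝 (partProd (-1) (d ∣ ·))) := by
  have zeroth := (hasProd_partProd_dvd (-1 : R) hd).tendsto_prod_nat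
  have rest : Tendsto (fun n ↦ ∑ s ∈ range n, (-1) ^ (s + 1) *
      shanksTerm ((X : R⟦X⟧) ^ d) n (s + 1) * ((X ^ d) ^ (n + 1)) ^ (s + 1)) atTop (𝓝 0) := by
    refine tendsto_of_X_pow_dvd_sub fun n ↦ ?_
    rw [sub_zero]
    refine dvd_sum fun s _ ↦ Dvd.dvd.mul_left ?_ _
    rw [← pow_mul, ← pow_mul]
    refine pow_dvd_pow _ ?_
    calc n ≤ 1 * (n + 1) * 1 := by lia
      _ ≤ d * (n + 1) * (s + 1) := by gcongr <;> lia
      _ = d * ((n + 1) * (s + 1)) := mul_assoc ..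
  have := rest.add zeroth
  rw [zero_add] at this
  refine this.congr fun n ↦ ?_
  rw [sum_range_succ', shanksTerm_zero]
  simp [sub_eq_add_neg]

variable [T2Space R]

theorem partProd_neg_one_dvd (d : ℕ) :
    partProd (-1 : R) (d ∣ ·) = partProd 1 (d ∣ ·) * (1 + 2 * thetaTail R d) := by
  obtain rfl | hd := eq_or_ne d 0
  · simp [partProd, thetaTail_zero]
  refine tendsto_nhds_unique (tendsto_sum_shanksTerm hd) ?_
  have := (hasProd_partProd_dvd (1 : R) hd).tendsto_prod_nat.mul
    (((tendsto_sum_thetaTail hd).const_mul 2).const_add 1)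
  refine this.congr fun n ↦ ?_
  rw [← shanks_identity]
  simp

theorem partProd_regular_mul (ε : R) (ℓ μ : ℕ) :
    partProd ε (fun k ↦ ¬ ℓ ∣ k ∧ ¬ μ ∣ k) * partProd ε (ℓ ∣ ·) * partProd ε (μ ∣ ·) =
      partProd ε (1 ∣ ·) * partProd ε (ℓ.lcm μ ∣ ·) := by
  have regular_prod := (((hasProd_partProd ε fun k ↦ ¬ ℓ ∣ k ∧ ¬ μ ∣ k).mul
    (hasProd_partProd ε (ℓ ∣ ·))).mul (hasProd_partProd ε (μ ∣ ·)))
  refine regular_prod.unique ?_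
  convert (hasProd_partProd ε (1 ∣ ·)).mul (hasProd_partProd ε (ℓ.lcm μ ∣ ·)) using 2 with i
  by_cases hℓ : ℓ ∣ i + 1 <;> by_cases hμ : μ ∣ i + 1 <;> simp [hℓ, hμ, Nat.lcm_dvd_iff]

theorem mk_card_restricted_mul_partProd (p : ℕ → Prop) [DecidablePred p] :
    (PowerSeries.mk fun n ↦ (#(Nat.Partition.restricted n p) : R)) * partProd (-1) p = 1 := by
  rw [Nat.Partition.powerSeriesMk_card_restricted_eq_tprod, partProd,
    ← (Nat.Partition.multipliable_powerSeriesMk_card_restricted R p).tprod_mul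
      (multipliable_partProd _ _)]
  refine Eq.trans (tprod_congr fun i ↦ ?_) tprod_one
  split_ifs
  · have := WithPiTopology.tsum_pow_mul_one_sub_of_constantCoeff_eq_zero
      (f := (X : R⟦X⟧) ^ (i + 1)) (by simp)
    simpa [pow_mul, sub_eq_add_neg] using this
  · simp

end Products

theorem mk_Rbar_mul_theta (ℓ μ : ℕ) :
    (PowerSeries.mk fun n ↦ (Rbar ℓ μ n : R)) * (1 + 2 * thetaTail R 1) *
      (1 + 2 * thetaTail R (ℓ.lcm μ)) = (1 + 2 * thetaTail R ℓ) * (1 + 2 * thetaTail R μ) := by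
  let : TopologicalSpace R := ⊥
  have : DiscreteTopology R := ⟨rfl⟩
  let p (k : ℕ) := ¬ ℓ ∣ k ∧ ¬ μ ∣ k
  let P := PowerSeries.mk fun n ↦ (#(Nat.Partition.restricted n p) : R)
  have overpartitions : (PowerSeries.mk fun n ↦ (Rbar ℓ μ n : R)) = P * partProd 1 p := by
    rw [← mk_card_restricted_distinct]
    ext n
    simp only [coeff_mk, coeff_mul, Rbar, regularCount, regularDistinctCount, Nat.cast_sum,
      Nat.cast_mul, Fintype.card_subtype, Nat.Partition.restricted, P, p]
  have plain : P * partProd (-1) p = 1 := mk_card_restricted_mul_partProd p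
  have distinct := partProd_regular_mul (1 : R) ℓ μ
  have signed := partProd_regular_mul (-1 : R) ℓ μ
  rw [partProd_neg_one_dvd ℓ, partProd_neg_one_dvd μ, partProd_neg_one_dvd 1,
    partProd_neg_one_dvd (ℓ.lcm μ)] at signed
  rw [overpartitions, ← ((isUnit_partProd (1 : R) (1 ∣ ·)).mul
    (isUnit_partProd (1 : R) (ℓ.lcm μ ∣ ·))).mul_left_inj]
  linear_combination (-P * partProd 1 p) * signed + (1 + 2 * thetaTail R ℓ) *
    (1 + 2 * thetaTail R μ) * (partProd 1 (ℓ ∣ ·) * partProd 1 (μ ∣ ·) * partProd 1 p * plain +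
      distinct)

section Support

variable (R) in
/-- The power series whose exponents all lie in the set `S` of residues modulo `m`. -/
def supportedOn {m : ℕ} (S : Finset (ZMod m)) : Submodule R R⟦X⟧ where
  carrier := {f | ∀ n : ℕ, (n : ZMod m) ∉ S → coeff n f = 0}
  add_mem' hf hg n hn := by rw [map_add, hf n hn, hg n hn, add_zero]
  zero_mem' _ _ := map_zero _
  smul_mem' r f hf n hn := by rw [coeff_smul, hf n hn, smul_zero]

section

variable {m : ℕ} {S T U : Finset (ZMod m)} {f g : R⟦X⟧}

lemma mul_mem_supportedOn (hf : f ∈ supportedOn R S) (hg : g ∈ supportedOn R T)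
    (h : S + T ⊆ U) : f * g ∈ supportedOn R U := by
  intro n hn
  rw [coeff_mul]
  refine sum_eq_zero fun ij hij ↦ ?_
  by_contra hne
  have hi : (ij.1 : ZMod m) ∈ S := by_contra fun hi ↦ left_ne_zero_of_mul hne (hf _ hi)
  have hj : (ij.2 : ZMod m) ∈ T := by_contra fun hj ↦ right_ne_zero_of_mul hne (hg _ hj)
  apply hn
  rw [← HasAntidiagonal.mem_antidiagonal.mp hij, Nat.cast_add]
  exact h (add_mem_add hi hj)

lemma two_mul_mem_supportedOn (hf : f ∈ supportedOn R S) : 2 * f ∈ supportedOn R S := by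
  rw [two_mul]
  exact add_mem hf hf

lemma one_mem_supportedOn (h : 0 ∈ S) : 1 ∈ supportedOn R S := by
  intro n hn
  rw [coeff_one, if_neg]
  rintro rfl
  exact hn (by simpa using h)

end

lemma thetaTail_mem_supportedOn {m d : ℕ} {S : Finset (ZMod m)} (h : ∀ x : ZMod m, d * x ^ 2 ∈ S) :
    thetaTail R d ∈ supportedOn R S := by
  intro n hn
  rw [thetaTail, coeff_mk]
  refine sum_eq_zero fun j hj ↦ absurd ?_ hn
  rw [← (mem_filter.mp hj).2]
  simpa using h j

lemma thetaTail_mem_supportedOn_of_modEq_one {d : ℕ} (h : d ≡ 1 [MOD 3]) :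
    thetaTail R d ∈ supportedOn R (m := 9) {0, 1, 4, 7} := by
  refine thetaTail_mem_supportedOn ?_
  have : (d : ZMod 9) ∈ ({1, 4, 7} : Finset (ZMod 9)) := by
    rw [Nat.ModEq] at h
    rw [← ZMod.natCast_mod]
    rcases (by lia : d % 9 = 1 ∨ d % 9 = 4 ∨ d % 9 = 7) with h | h | h <;> rw [h] <;> decide
  revert this
  generalize (d : ZMod 9) = d
  decide +revert

lemma thetaTail_mem_supportedOn_of_dvd {m d : ℕ} (h : m ∣ d) :
    thetaTail R d ∈ supportedOn R (m := m) {0} :=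
  thetaTail_mem_supportedOn fun x ↦ by simp [(ZMod.natCast_eq_zero_iff d m).mpr h]

end Support

section ModSixteen

/-- The part of `(1 + 2 b) (1 + 2 c) / ((1 + 2 a) (1 + 2 d))` modulo 16 that is left after
`8 a² (b - a)` has been split off. The factor `(1 - 2 d) (1 + (2 d)²)` is the inverse of `1 + 2 d`
modulo 16, and `1 + 2 (b - a) (1 - 2 a)` is a truncation of `(1 + 2 b) / (1 + 2 a)`. -/
def mainTerm (a b c d : R) : R :=
  (1 + 2 * c) * ((1 - 2 * d) * (1 + 2 * d * (2 * d))) * (1 + 2 * ((b - a) * (1 - 2 * a)))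

theorem sixteen_dvd_sub_mainTerm {G a b c d : R}
    (h : G * (1 + 2 * a) * (1 + 2 * d) = (1 + 2 * b) * (1 + 2 * c)) :
    16 ∣ G - (mainTerm a b c d + 8 * (a ^ 2 * (b - a))) := by
  refine ⟨(c + (1 + 2 * c) * (-d + 2 * d ^ 2 - 4 * d ^ 3)) * (a ^ 2 * (b - a)) -
    (1 + 2 * c) * (1 - 2 * d + 4 * d ^ 2 - 8 * d ^ 3) * a ^ 3 * b +
    (a ^ 4 + d ^ 4 - 16 * a ^ 4 * d ^ 4) * G, ?_⟩
  rw [mainTerm]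
  -- Each factor multiplying `h` inverts `1 + 2 a`, respectively `1 + 2 d`, modulo 16.
  linear_combination (1 - 2 * a + 4 * a ^ 2 - 8 * a ^ 3) *
    (1 - 2 * d + 4 * d ^ 2 - 8 * d ^ 3) * h

lemma mainTerm_mem_supportedOn {a b c d : R⟦X⟧}
    (ha : a ∈ supportedOn R (m := 9) {0, 1, 4, 7}) (hb : b ∈ supportedOn R (m := 9) {0, 1, 4, 7})
    (hc : c ∈ supportedOn R (m := 9) {0}) (hd : d ∈ supportedOn R (m := 9) {0}) :
    mainTerm a b c d ∈ supportedOn R (m := 9) {3, 6}ᶜ := by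
  have one_mem : 1 ∈ supportedOn R (m := 9) {0} := one_mem_supportedOn (by decide)
  have zero_add_zero : ({0} + {0} : Finset (ZMod 9)) ⊆ {0} := by decide
  have c_factor := add_mem one_mem (two_mul_mem_supportedOn hc)
  have two_d := two_mul_mem_supportedOn hd
  have d_factor := mul_mem_supportedOn (sub_mem one_mem two_d)
    (add_mem one_mem (mul_mem_supportedOn two_d two_d zero_add_zero)) zero_add_zero
  have one_sub_two_a : 1 - 2 * a ∈ supportedOn R (m := 9) {0, 1, 4, 7} :=
    sub_mem (one_mem_supportedOn (by decide)) (two_mul_mem_supportedOn ha)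
  have ab_factor : 1 + 2 * ((b - a) * (1 - 2 * a)) ∈ supportedOn R (m := 9) {3, 6}ᶜ :=
    add_mem (one_mem_supportedOn (by decide)) (two_mul_mem_supportedOn
      (mul_mem_supportedOn (sub_mem hb ha) one_sub_two_a (by decide)))
  exact mul_mem_supportedOn (mul_mem_supportedOn c_factor d_factor zero_add_zero) ab_factor
    (by decide)

end ModSixteen

section SquareReps

lemma not_three_dvd_of_two_mul_sq_add_sq {x z : ℤ} (h : (2 * x ^ 2 + z ^ 2) % 9 = 6) :
    ¬ 3 ∣ x ∧ ¬ 3 ∣ z := by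
  have three_dvd_iff : 3 ∣ x ↔ 3 ∣ z := by
    constructor <;> rintro ⟨k, rfl⟩ <;> rw [mul_pow] at h <;>
      exact Int.prime_three.dvd_of_dvd_pow (n := 2) (by lia)
  rw [← three_dvd_iff, and_self]
  rintro ⟨k, rfl⟩
  obtain ⟨l, rfl⟩ := three_dvd_iff.mp (dvd_mul_right 3 k)
  rw [mul_pow, mul_pow] at h
  lia

/-- The isometry `(x, z) ↦ ((x + 2 z) / 3, (4 x - z) / 3)` of the form `2 x² + z²`, acting on
absolute values; it is integral if `x ≡ z (mod 3)`, and otherwise the sign of `z` is changed first.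
With `3 k = x - z` it reads `(x - 2 k, x + k)`. -/
def squareReflection (p : ℕ × ℕ) : ℕ × ℕ :=
  let k : ℤ := if p.1 ≡ p.2 [MOD 3] then (p.1 - p.2) / 3 else (p.1 + p.2) / 3
  ((p.1 - 2 * k).natAbs, (p.1 + k).natAbs)

lemma squareReflection_natAbs {a : ℤ} (ha : ¬ 3 ∣ a) (k : ℤ) :
    squareReflection (a.natAbs, (a - 3 * k).natAbs) = ((a - 2 * k).natAbs, (a + k).natAbs) := by
  simp only [squareReflection, Nat.ModEq]
  split_ifs <;> ext <;> dsimp only <;> omega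

/-- The pairs of positive integers with `a x² + b z² = N`, for `a` and `b` nonzero. The box
`[1, N]²` only serves to make the set finite by construction. -/
def squareReps (a b N : ℕ) : Finset (ℕ × ℕ) :=
  {p ∈ Icc 1 N ×ˢ Icc 1 N | a * p.1 ^ 2 + b * p.2 ^ 2 = N}

lemma mem_squareReps {a b N x z : ℕ} (ha : a ≠ 0) (hb : b ≠ 0) :
    (x, z) ∈ squareReps a b N ↔ x ≠ 0 ∧ z ≠ 0 ∧ a * x ^ 2 + b * z ^ 2 = N := by
  have le_mul_sq {c : ℕ} (hc : c ≠ 0) (y : ℕ) : y ≤ c * y ^ 2 :=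
    (Nat.le_self_pow two_ne_zero y).trans (Nat.le_mul_of_pos_left _ (by lia))
  have := le_mul_sq ha x
  have := le_mul_sq hb z
  simp only [squareReps, mem_filter, mem_product, mem_Icc]
  lia

lemma squareReps_eq_empty {a b N : ℕ} (ha : Even a) (hb : Even b) (hN : Odd N) :
    squareReps a b N = ∅ := by
  rw [squareReps, filter_eq_empty_iff]
  rintro p - rfl
  exact Nat.not_even_iff_odd.mpr hN ((ha.mul_right _).add (hb.mul_right _))

lemma exists_eq_natAbs_sub_three_mul {x z : ℕ} (h : (2 * x ^ 2 + z ^ 2) % 9 = 6) :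
    ∃ a k : ℤ, x = a.natAbs ∧ z = (a - 3 * k).natAbs := by
  obtain ⟨hx, hz⟩ : ¬ 3 ∣ (x : ℤ) ∧ ¬ 3 ∣ (z : ℤ) :=
    not_three_dvd_of_two_mul_sq_add_sq (by exact_mod_cast h)
  clear h
  have : 3 ∣ (x : ℤ) - z ∨ 3 ∣ (x : ℤ) + z := by lia
  rcases this with ⟨k, hk⟩ | ⟨k, hk⟩ <;> exact ⟨x, k, by lia, by lia⟩

section

variable {N : ℕ}

lemma exists_eq_natAbs_of_mem_squareReps (hN : N % 9 = 6) {p : ℕ × ℕ}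
    (hp : p ∈ squareReps 2 1 N) : ∃ a k : ℤ, p = (a.natAbs, (a - 3 * k).natAbs) ∧
      2 * a ^ 2 + (a - 3 * k) ^ 2 = N := by
  obtain ⟨x, z⟩ := p
  obtain ⟨-, -, rfl⟩ := (mem_squareReps two_ne_zero one_ne_zero).mp hp
  rw [one_mul] at hN
  obtain ⟨a, k, rfl, rfl⟩ := exists_eq_natAbs_sub_three_mul hN
  exact ⟨a, k, rfl, by simp⟩

lemma natAbs_mem_squareReps_two_one (hN : N % 9 = 6) {x z : ℤ} (h : 2 * x ^ 2 + z ^ 2 = N) :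
    (x.natAbs, z.natAbs) ∈ squareReps 2 1 N := by
  obtain ⟨hx, hz⟩ := not_three_dvd_of_two_mul_sq_add_sq (by lia : (2 * x ^ 2 + z ^ 2) % 9 = 6)
  refine (mem_squareReps two_ne_zero one_ne_zero).mpr ⟨?_, ?_, ?_⟩
  · rintro hx0
    exact hx (Int.natAbs_eq_zero.mp hx0 ▸ dvd_zero 3)
  · rintro hz0
    exact hz (Int.natAbs_eq_zero.mp hz0 ▸ dvd_zero 3)
  · zify
    simpa using h

lemma squareReflection_of_eq (hN : N % 9 = 6) {a k : ℤ} (h : 2 * a ^ 2 + (a - 3 * k) ^ 2 = N) :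
    squareReflection (a.natAbs, (a - 3 * k).natAbs) = ((a - 2 * k).natAbs, (a + k).natAbs) :=
  squareReflection_natAbs (not_three_dvd_of_two_mul_sq_add_sq (z := a - 3 * k) (by lia)).1 k

lemma squareReflection_mem_squareReps (hN : N % 9 = 6) {p : ℕ × ℕ} (hp : p ∈ squareReps 2 1 N) :
    squareReflection p ∈ squareReps 2 1 N := by
  obtain ⟨a, k, rfl, h⟩ := exists_eq_natAbs_of_mem_squareReps hN hp
  rw [squareReflection_of_eq hN h]
  exact natAbs_mem_squareReps_two_one hN (by linear_combination h)

lemma squareReflection_squareReflection (hN : N % 9 = 6) {p : ℕ × ℕ} (hp : p ∈ squareReps 2 1 N) :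
    squareReflection (squareReflection p) = p := by
  obtain ⟨a, k, rfl, h⟩ := exists_eq_natAbs_of_mem_squareReps hN hp
  have second := squareReflection_of_eq hN (a := a - 2 * k) (k := -k) (by linear_combination h)
  rw [squareReflection_of_eq hN h]
  convert second using 3 <;> ring_nf

lemma squareReflection_ne_self (hN : N % 18 = 15) {p : ℕ × ℕ} (hp : p ∈ squareReps 2 1 N) :
    squareReflection p ≠ p := by
  obtain ⟨a, k, rfl, h⟩ := exists_eq_natAbs_of_mem_squareReps (by lia) hp
  rw [squareReflection_of_eq (by lia) h]
  intro hfix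
  obtain hk | rfl : k = 0 ∨ a = k := by
    have := congrArg Prod.fst hfix
    dsimp only at this
    lia
  · subst hk
    have ha : ¬ 3 ∣ a := (not_three_dvd_of_two_mul_sq_add_sq (z := a) (by lia)).1
    have a_sq : a ^ 2 % 3 = 1 := by
      rcases (by lia : a % 3 = 1 ∨ a % 3 = 2) with h | h <;> simp [pow_two, Int.mul_emod, h]
    lia
  · have : (N : ℤ) = 2 * (3 * a ^ 2) := by linear_combination -h
    lia

theorem even_card_squareReps_two_one (hN : N % 18 = 15) : Even #(squareReps 2 1 N) := by
  have hN9 : N % 9 = 6 := by lia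
  rw [← ZMod.natCast_eq_zero_iff_even, card_eq_sum_ones, Nat.cast_sum]
  exact sum_involution (fun p _ ↦ squareReflection p) (fun _ _ ↦ by decide)
    (fun p hp _ ↦ squareReflection_ne_self hN hp)
    (fun p hp ↦ squareReflection_mem_squareReps hN9 hp)
    (fun p hp ↦ squareReflection_squareReflection hN9 hp)

end

end SquareReps

section Parity

lemma coeff_thetaTail_mul_thetaTail {a b : ℕ} (ha : a ≠ 0) (hb : b ≠ 0) (N : ℕ) :
    coeff N (thetaTail R a * thetaTail R b) = ∑ p ∈ squareReps a b N, (-1) ^ (p.1 + p.2) := by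
  rw [coeff_mul, squareReps, sum_filter]
  calc ∑ ij ∈ antidiagonal N, coeff ij.1 (thetaTail R a) * coeff ij.2 (thetaTail R b)
    _ = ∑ ij ∈ antidiagonal N, ∑ p ∈ Icc 1 N ×ˢ Icc 1 N,
          if (a * p.1 ^ 2, b * p.2 ^ 2) = ij then (-1) ^ (p.1 + p.2) else 0 := by
      refine sum_congr rfl fun ij hij ↦ ?_
      have sum_eq := HasAntidiagonal.mem_antidiagonal.mp hij
      rw [coeff_thetaTail_eq_sum ha (by lia : ij.1 ≤ N),
        coeff_thetaTail_eq_sum hb (by lia : ij.2 ≤ N), sum_mul_sum, ← sum_product',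
        ← filter_product, sum_filter]
      simp only [pow_add, Prod.ext_iff]
    _ = _ := by
      rw [sum_comm]
      simp only [sum_ite_eq, HasAntidiagonal.mem_antidiagonal]

theorem even_coeff_thetaTail_one_sq_mul_iff {k : ℕ} (hk : k ≠ 0) (N : ℕ) :
    Even (coeff N (thetaTail ℤ 1 ^ 2 * thetaTail ℤ k)) ↔ Even #(squareReps 2 k N) := by
  have reduce : ((coeff N (thetaTail ℤ 1 ^ 2 * thetaTail ℤ k) : ℤ) : ZMod 2) =
      (#(squareReps 2 k N) : ZMod 2) :=
    calc ((coeff N (thetaTail ℤ 1 ^ 2 * thetaTail ℤ k) : ℤ) : ZMod 2)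
      _ = coeff N (thetaTail (ZMod 2) 1 ^ 2 * thetaTail (ZMod 2) k) := by
        rw [← map_thetaTail (Int.castRingHom (ZMod 2)), ← map_thetaTail (Int.castRingHom (ZMod 2)),
          ← map_pow, ← map_mul, coeff_map, eq_intCast]
      _ = _ := by
        rw [thetaTail_sq_of_charP_two one_ne_zero, coeff_thetaTail_mul_thetaTail (by simp) hk]
        simp [CharTwo.neg_eq]
  rw [← ZMod.intCast_eq_zero_iff_even, reduce, ZMod.natCast_eq_zero_iff_even]

theorem even_coeff_thetaTail_one_sq_mul_sub {ℓ N : ℕ} (hℓ : Even ℓ) (hℓ0 : ℓ ≠ 0)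
    (hN : N % 18 = 15) :
    Even (coeff N (thetaTail ℤ 1 ^ 2 * (thetaTail ℤ ℓ - thetaTail ℤ 1))) := by
  rw [mul_sub, map_sub]
  refine Even.sub ?_ ?_
  · rw [even_coeff_thetaTail_one_sq_mul_iff hℓ0,
      squareReps_eq_empty even_two hℓ (Nat.odd_iff.mpr (by lia)), card_empty]
    exact Even.zero
  · rw [even_coeff_thetaTail_one_sq_mul_iff one_ne_zero]
    exact even_card_squareReps_two_one hN

end Parity

/-- At `μ = 0` this concerns the `ℓ`-regular overpartitions, since no part is divisible by `0`. -/
theorem Rbar_four_nine_18n_15_mod_16_general {ℓ μ : ℕ} (hℓ : ℓ ≡ 4 [MOD 6]) (hμ : 9 ∣ μ)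
    (n : ℕ) : Rbar ℓ μ (18 * n + 15) ≡ 0 [MOD 16] := by
  have hℓ₃ : ℓ ≡ 1 [MOD 3] := (hℓ.of_dvd (by decide : 3 ∣ 6)).trans rfl
  have hℓ₂ : Even ℓ := Nat.even_iff.mpr (hℓ.of_dvd (by decide : 2 ∣ 6))
  have hℓ₀ : ℓ ≠ 0 := by
    rintro rfl
    contradiction
  obtain ⟨q, hq⟩ := sixteen_dvd_sub_mainTerm (mk_Rbar_mul_theta (R := ℤ) ℓ μ)
  have main_zero := mainTerm_mem_supportedOn (R := ℤ)
    (thetaTail_mem_supportedOn_of_modEq_one (d := 1) rfl)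
    (thetaTail_mem_supportedOn_of_modEq_one hℓ₃) (thetaTail_mem_supportedOn_of_dvd hμ)
    (thetaTail_mem_supportedOn_of_dvd (hμ.trans (Nat.dvd_lcm_right ℓ μ))) (18 * n + 15) (by
      rw [← ZMod.natCast_mod, show (18 * n + 15) % 9 = 6 by lia]
      decide)
  obtain ⟨r, hr⟩ := even_coeff_thetaTail_one_sq_mul_sub hℓ₂ hℓ₀ (by lia : (18 * n + 15) % 18 = 15)
  have coeff_eq := congrArg (coeff (18 * n + 15)) hq
  rw [← map_ofNat C 16, ← map_ofNat C 8, map_sub, map_add, coeff_mk, main_zero, coeff_C_mul,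
    coeff_C_mul, hr] at coeff_eq
  rw [Nat.modEq_zero_iff_dvd]
  lia

theorem Rbar_four_nine_18n_15_mod_16 (n : ℕ) :
    Rbar 4 9 (18 * n + 15) ≡ 0 [MOD 16] :=
  Rbar_four_nine_18n_15_mod_16_general rfl dvd_rfl n
end

section
/- For all integers n ≥ 0, the number of (4,9)-regular overpartitions satisfies R̄_{4,9}(24n+20) ≡ 0 (mod 27). -/
/-!
Gauss's product for `φ(-q) = ∑ (-1)^m q^(m²)` gives `φ(-q) φ(-q³⁶) G = φ(-q⁴) φ(-q⁹)` for the
generating function `G` of `R̄_{4,9}`. Rotating lattices yields Ramanujan's relations between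
`φ(±q)`, `φ(±q²)`, `φ(±q³)` and `φ(±q⁴)`; with `a = φ(-q)` and `b = φ(-q³)` they turn the component
`G₄` of exponents divisible by `4` into

  `4 G₄ φ(-q⁹) a⁴ = φ(-q⁹) (a² + 3b²)² - 12 a² b φ(q³) φ(q⁹)`.

One of these relations, `4 φ(q) φ(q³) a b = (3b² - a²)(a² + b²)`, is not a lattice identity: the
difference `F` of its two sides satisfies `t F = s F(q²)` with `ord t ≤ ord s` and `F(0) = 0`, which
forces `F = 0`.

Multiplying by a power of `φ(-ωq) φ(-ω²q)`, where `ω` is a primitive cube root of unity, makes the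
denominator a series in `q³`, and the component of exponents `3n + 2` becomes visibly divisible by
`9`. Modulo `3` the quotient `L` by `9` satisfies `q² L(q³) = -(e - e³)²` with
`e = φ(-q)⁴ - 1`, and `e` is odd modulo `3` because `φ(q)⁴ + φ(-q)⁴ ≡ 2`. So `L` is even modulo `3`,
and the coefficients of `q^(12(2n + 1) + 8) = q^(24n + 20)` in `G` are divisible by `27`.
-/

open PowerSeries PowerSeries.WithPiTopology

section InfiniteSums

lemma summable_monomial_of_finite_fibers {R ι : Type*} [Semiring R] [TopologicalSpace R] {Q : ι → ℕ}
    (hQ : ∀ n, (Q ⁻¹' {n}).Finite) (w : ι → R) : Summable fun i => monomial (Q i) (w i) := by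
  refine (summable_iff_summable_coeff R).2 fun n => summable_of_hasFiniteSupport ?_
  refine (hQ n).subset fun i hi => ?_
  simp only [Function.mem_support, coeff_monomial, ne_eq, ite_eq_right_iff, not_forall] at hi
  exact hi.1.symm

lemma continuous_expand {R : Type*} [CommRing R] [TopologicalSpace R] (k : ℕ) (hk : k ≠ 0) :
    Continuous (expand k hk : R⟦X⟧ → R⟦X⟧) := by
  refine continuous_iff_continuousAt.2 fun f => (tendsto_iff_coeff_tendsto ..).2 fun n => ?_
  simp only [coeff_expand]
  split_ifs
  exacts [(continuous_coeff R _).continuousAt, tendsto_const_nhds]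

end InfiniteSums

/-- The theta series `∑_{m ∈ ℤ} w(m) q^(k m²)` with weight `w`. For `k = 0` the sum need not
converge. -/
noncomputable def theta (w : ℤ → ℤ) (k : ℕ) : ℤ⟦X⟧ :=
  ∑' m : ℤ, monomial (k * m.natAbs ^ 2) (w m)

/-- The theta series `∑_{(a, b) ∈ ℤ²} w(a, b) q^(j a² + k b²)` of a diagonal binary form. For
`j = 0` or `k = 0` the sum need not converge. -/
noncomputable def binaryTheta (w : ℤ × ℤ → ℤ) (j k : ℕ) : ℤ⟦X⟧ :=
  ∑' p : ℤ × ℤ, monomial (j * p.1.natAbs ^ 2 + k * p.2.natAbs ^ 2) (w p)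

lemma binaryTheta_eq_comp {w : ℤ × ℤ → ℤ} {j k j' k' : ℕ} {f : ℤ × ℤ → ℤ × ℤ}
    (hf : Function.Injective f) (hw : ∀ p, w p ≠ 0 → p ∈ Set.range f)
    (hform : ∀ p, (j * (f p).1 ^ 2 + k * (f p).2 ^ 2 : ℤ) = j' * p.1 ^ 2 + k' * p.2 ^ 2) :
    binaryTheta w j k = binaryTheta (w ∘ f) j' k' := by
  rw [binaryTheta, ← hf.tsum_eq]
  · refine tsum_congr fun p => ?_
    congr 2
    zify
    simpa only [sq_abs] using hform p
  · exact fun p hp => hw p fun h => hp (by simp only [h, map_zero])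

lemma theta_eq_of_support_dvd {w : ℤ → ℤ} {d : ℕ} [NeZero d] (k : ℕ)
    (hw : ∀ m, ¬ (d : ℤ) ∣ m → w m = 0) :
    theta w k = theta (fun m => w (d * m)) (d ^ 2 * k) := by
  have hd : (d : ℤ) ≠ 0 := Nat.cast_ne_zero.2 (NeZero.ne d)
  rw [theta, theta, ← (mul_right_injective₀ hd).tsum_eq]
  · refine tsum_congr fun m => ?_
    rw [Int.natAbs_mul, Int.natAbs_natCast, mul_pow, mul_left_comm k, mul_assoc]
  · intro m hm
    have : w m ≠ 0 := fun h => hm (by simp [h])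
    obtain ⟨c, rfl⟩ := not_imp_comm.1 (hw m) this
    exact ⟨c, rfl⟩

lemma mem_Icc_of_mul_natAbs_sq_le {k n : ℕ} [NeZero k] {m : ℤ} (h : k * m.natAbs ^ 2 ≤ n) :
    m ∈ Finset.Icc (-n : ℤ) n := by
  have hm : m.natAbs ≤ n :=
    calc m.natAbs ≤ m.natAbs ^ 2 := Nat.le_self_pow two_ne_zero _
      _ ≤ k * m.natAbs ^ 2 := Nat.le_mul_of_pos_left _ (NeZero.pos k)
      _ ≤ n := h
  rw [Finset.mem_Icc]
  omega

section Theta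

variable (v w : ℤ → ℤ) (j k : ℕ) [NeZero j] [NeZero k]

lemma summable_theta : Summable fun m : ℤ => monomial (k * m.natAbs ^ 2) (w m) :=
  summable_monomial_of_finite_fibers (fun n => (Finset.Icc (-n : ℤ) n).finite_toSet.subset
    fun _ hm => mem_Icc_of_mul_natAbs_sq_le (Set.mem_singleton_iff.1 hm).le) w

lemma summable_binaryTheta (u : ℤ × ℤ → ℤ) : Summable fun p : ℤ × ℤ =>
    monomial (j * p.1.natAbs ^ 2 + k * p.2.natAbs ^ 2) (u p) :=
  summable_monomial_of_finite_fibers (fun n =>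
    (Finset.Icc (-n : ℤ) n ×ˢ Finset.Icc (-n : ℤ) n).finite_toSet.subset fun p hp => by
      have hn := (Set.mem_singleton_iff.1 hp).le
      exact Finset.mem_coe.2 <| Finset.mem_product.2
        ⟨mem_Icc_of_mul_natAbs_sq_le (le_of_add_le_left hn),
          mem_Icc_of_mul_natAbs_sq_le (le_of_add_le_right hn)⟩) u

lemma theta_add : theta (v + w) k = theta v k + theta w k := by
  simp only [theta, ← (summable_theta v k).tsum_add (summable_theta w k), Pi.add_apply, map_add]

lemma theta_sub : theta (v - w) k = theta v k - theta w k := by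
  simp only [theta, ← (summable_theta v k).tsum_sub (summable_theta w k), Pi.sub_apply, map_sub]

lemma theta_mul_theta :
    theta v j * theta w k = binaryTheta (fun p => v p.1 * w p.2) j k := by
  rw [theta, theta, (summable_theta v j).tsum_mul_tsum (summable_theta w k)]
  · simp only [binaryTheta, monomial_mul_monomial]
  · simpa only [monomial_mul_monomial] using summable_binaryTheta j k fun p => v p.1 * w p.2

lemma binaryTheta_add (u u' : ℤ × ℤ → ℤ) :
    binaryTheta (u + u') j k = binaryTheta u j k + binaryTheta u' j k := by
  simp only [binaryTheta, ← (summable_binaryTheta j k u).tsum_add (summable_binaryTheta j k u'),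
    Pi.add_apply, map_add]

lemma binaryTheta_sub (u u' : ℤ × ℤ → ℤ) :
    binaryTheta (u - u') j k = binaryTheta u j k - binaryTheta u' j k := by
  simp only [binaryTheta, ← (summable_binaryTheta j k u).tsum_sub (summable_binaryTheta j k u'),
    Pi.sub_apply, map_sub]

lemma coeff_theta (n : ℕ) :
    coeff n (theta w k) = ∑' m : ℤ, if n = k * m.natAbs ^ 2 then w m else 0 := by
  simp only [theta, (summable_theta w k).map_tsum (coeff n) (continuous_coeff ℤ n), coeff_monomial]

lemma coeff_theta_of_not_dvd {n : ℕ} (h : ¬ k ∣ n) : coeff n (theta w k) = 0 := by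
  rw [coeff_theta, tsum_congr fun m => if_neg fun hm => h ⟨_, hm⟩, tsum_zero]

lemma expand_theta : expand j (NeZero.ne j) (theta w k) = theta w (j * k) := by
  simp only [theta, (summable_theta w k).map_tsum _ (continuous_expand j (NeZero.ne j)),
    expand_monomial, mul_assoc]

lemma constantCoeff_theta : constantCoeff (theta w k) = w 0 := by
  rw [← coeff_zero_eq_constantCoeff_apply, coeff_theta, tsum_eq_single 0]
  · simp
  · intro m hm
    simp [hm, NeZero.ne k]

lemma coeff_one_theta_one : coeff 1 (theta w 1) = w 1 + w (-1) := by
  rw [coeff_theta, tsum_eq_sum (s := {1, -1})]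
  · simp
  · intro m hm
    simp only [Finset.mem_insert, Finset.mem_singleton, not_or] at hm
    exact if_neg fun h => by
      have : m.natAbs = 1 := by simpa using h.symm
      omega

end Theta

/-- Ramanujan's theta function `φ(q^k)`, where `φ(q) = ∑_{m ∈ ℤ} q^(m²)`. -/
noncomputable def phi (k : ℕ) : ℤ⟦X⟧ := theta 1 k

/-- The series `φ(-q)` evaluated at `q^k`, that is `∑_{m ∈ ℤ} (-1)^m q^(k m²)`. -/
noncomputable def phiNeg (k : ℕ) : ℤ⟦X⟧ := theta (fun m => (m.negOnePow : ℤ)) k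

/-- The odd part `∑_{m odd} q^(k m²)` of `φ(q^k)`, which is `2 q^k ψ(q^(8k))` in Ramanujan's
notation. -/
noncomputable def oddTheta (k : ℕ) : ℤ⟦X⟧ := theta (fun m => if Odd m then 1 else 0) k

lemma theta_even_eq_phi (k : ℕ) : theta (fun m => if Even m then 1 else 0) k = phi (4 * k) := by
  rw [theta_eq_of_support_dvd (d := 2)]
  · simp only [Nat.cast_ofNat, even_two, Even.mul_right, if_true]
    rfl
  · exact fun m hm => if_neg (mt even_iff_two_dvd.1 hm)

/-- For `ε = ±1` the map `(c, d) ↦ (c + 3d, ε(c - d))` is, up to conjugation, multiplication by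
twice a cube root of unity on `ℤ[√-3]`, so it multiplies the form `a² + 3b²` by `4`. -/
lemma binaryTheta_rotation (ε : ℤˣ) (k : ℕ) :
    binaryTheta (fun p => if Odd p.1 ∧ 4 ∣ p.1 - ε * p.2 then 1 else 0) k (3 * k) =
      binaryTheta (fun p => if Odd (p.1 + p.2) then 1 else 0) (4 * k) (12 * k) := by
  have hε : (ε : ℤ) * ε = 1 := by rw [← Units.val_mul, Int.units_mul_self, Units.val_one]
  have rotation_injective :
      Function.Injective fun p : ℤ × ℤ => (p.1 + 3 * p.2, ε * (p.1 - p.2)) := by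
    rintro ⟨a, b⟩ ⟨c, d⟩ h
    simp only [Prod.mk.injEq, mul_right_inj' ε.ne_zero] at h ⊢
    omega
  rw [binaryTheta_eq_comp rotation_injective]
  · congr 1
    funext ⟨c, d⟩
    have : c + 3 * d - ε * (ε * (c - d)) = 4 * d := by linear_combination (d - c) * hε
    simp only [Function.comp_apply, this, dvd_mul_right, and_true]
    congr 1
    simp only [eq_iff_iff, ← Int.not_even_iff_odd, Int.even_add, Int.even_mul]
    norm_num
  · rintro ⟨a, b⟩ h
    obtain ⟨-, d, hd⟩ : Odd a ∧ 4 ∣ a - ε * b := by_contra fun h' => h (if_neg h')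
    refine ⟨(a - 3 * d, d), Prod.ext (by dsimp only; ring) ?_⟩
    dsimp only
    linear_combination ε * hd + b * hε
  · intro p
    push_cast
    linear_combination 3 * k * (p.1 - p.2) ^ 2 * hε

section LatticeIdentities

variable (k : ℕ) [NeZero k]

lemma phi_eq_add : phi k = phi (4 * k) + oddTheta k := by
  rw [← theta_even_eq_phi, oddTheta, ← theta_add, phi]
  congr 1
  funext m
  rcases Int.even_or_odd m with hm | hm <;> simp [hm]

lemma phiNeg_eq_sub : phiNeg k = phi (4 * k) - oddTheta k := by
  rw [← theta_even_eq_phi, oddTheta, ← theta_sub, phiNeg]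
  congr 1
  funext m
  rcases Int.even_or_odd m with hm | hm
  · simp [hm, Int.negOnePow_even, Int.not_odd_iff_even.2 hm]
  · simp [hm, Int.negOnePow_odd, Int.not_even_iff_odd.2 hm]

lemma phi_four_mul_sq_add_oddTheta_sq : phi (4 * k) ^ 2 + oddTheta k ^ 2 = phi (2 * k) ^ 2 := by
  have rotation_injective : Function.Injective fun p : ℤ × ℤ => (p.1 + p.2, p.1 - p.2) := by
    rintro ⟨a, b⟩ ⟨c, d⟩ h
    simp only [Prod.mk.injEq] at h ⊢
    omega
  have weight_eq : ((fun p : ℤ × ℤ => (if Even p.1 then 1 else 0) * if Even p.2 then 1 else 0) +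
      fun p => (if Odd p.1 then 1 else 0) * if Odd p.2 then 1 else 0) =
      fun p : ℤ × ℤ => if Even (p.1 + p.2) then (1 : ℤ) else 0 := by
    funext ⟨a, b⟩
    simp only [Pi.add_apply, Int.even_iff, Int.odd_iff]
    split_ifs <;> omega
  rw [← theta_even_eq_phi, oddTheta, sq, sq, theta_mul_theta, theta_mul_theta, ← binaryTheta_add,
    weight_eq, phi, sq, theta_mul_theta, binaryTheta_eq_comp rotation_injective]
  · congr 1
    funext ⟨a, b⟩
    simp [show a + b + (a - b) = 2 * a by ring]
  · rintro ⟨a, b⟩ h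
    obtain ⟨c, hc⟩ : Even (a + b) := by_contra fun h' => h (if_neg h')
    exact ⟨(c, a - c), Prod.ext (by dsimp only; ring) (by dsimp only; omega)⟩
  · intro p
    push_cast
    ring

lemma oddTheta_mul_oddTheta_three_mul :
    oddTheta k * oddTheta (3 * k) =
      phi (4 * k) * phi (12 * k) - phiNeg (4 * k) * phiNeg (12 * k) := by
  have odd_weight : (fun p : ℤ × ℤ => (if Odd p.1 then 1 else 0) * if Odd p.2 then 1 else 0) =
      (fun p => if Odd p.1 ∧ 4 ∣ p.1 - ((1 : ℤˣ) : ℤ) * p.2 then 1 else 0) +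
        fun p => if Odd p.1 ∧ 4 ∣ p.1 - ((-1 : ℤˣ) : ℤ) * p.2 then (1 : ℤ) else 0 := by
    funext ⟨a, b⟩
    simp only [Pi.add_apply, Units.val_one, Units.val_neg, Int.odd_iff]
    split_ifs <;> omega
  have sign_weight : ((fun p : ℤ × ℤ => (1 : ℤ → ℤ) p.1 * (1 : ℤ → ℤ) p.2) -
      fun p => (p.1.negOnePow : ℤ) * p.2.negOnePow) =
      (fun p => if Odd (p.1 + p.2) then 1 else 0) + fun p => if Odd (p.1 + p.2) then 1 else 0 := by
    funext ⟨a, b⟩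
    simp only [Pi.sub_apply, Pi.add_apply, Pi.one_apply, ← Units.val_mul, ← Int.negOnePow_add]
    rcases Int.even_or_odd (a + b) with h | h
    · simp [h, Int.negOnePow_even, Int.not_odd_iff_even.2 h]
    · simp [h, Int.negOnePow_odd]
  simp only [oddTheta, phi, phiNeg, theta_mul_theta, odd_weight, binaryTheta_add,
    binaryTheta_rotation, ← binaryTheta_sub, sign_weight]

end LatticeIdentities

section ThetaIdentities

variable (j k : ℕ) [NeZero j] [NeZero k]

lemma expand_phi : expand j (NeZero.ne j) (phi k) = phi (j * k) := expand_theta ..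

lemma expand_phiNeg : expand j (NeZero.ne j) (phiNeg k) = phiNeg (j * k) := expand_theta ..

lemma constantCoeff_phi : constantCoeff (phi k) = 1 := constantCoeff_theta ..

lemma constantCoeff_phiNeg : constantCoeff (phiNeg k) = 1 := by
  rw [phiNeg, constantCoeff_theta, Int.negOnePow_zero, Units.val_one]

lemma phi_ne_zero : phi k ≠ 0 := fun h => by
  simpa [h] using constantCoeff_phi k

lemma phiNeg_ne_zero : phiNeg k ≠ 0 := fun h => by
  simpa [h] using constantCoeff_phiNeg k

lemma phi_sq_add_phiNeg_sq : phi k ^ 2 + phiNeg k ^ 2 = 2 * phi (2 * k) ^ 2 := by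
  rw [← phi_four_mul_sq_add_oddTheta_sq, phi_eq_add k, phiNeg_eq_sub k]
  ring

lemma phi_mul_phiNeg : phi k * phiNeg k = phiNeg (2 * k) ^ 2 := by
  have two_k : phi (2 * k) ^ 2 + phiNeg (2 * k) ^ 2 = 2 * phi (4 * k) ^ 2 := by
    simpa only [← mul_assoc, Nat.reduceMul] using phi_sq_add_phiNeg_sq (2 * k)
  rw [phi_eq_add k, phiNeg_eq_sub k]
  linear_combination -two_k - phi_four_mul_sq_add_oddTheta_sq k

lemma oddTheta_pow_four : oddTheta k ^ 4 = phi (4 * k) ^ 4 - phiNeg (4 * k) ^ 4 := by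
  have prod_two := phi_mul_phiNeg (2 * k)
  have sq_two := phi_sq_add_phiNeg_sq (2 * k)
  simp only [← mul_assoc, Nat.reduceMul] at prod_two sq_two
  linear_combination phi (2 * k) ^ 2 * sq_two
    - (phi (2 * k) * phiNeg (2 * k) + phiNeg (4 * k) ^ 2) * prod_two
    + (oddTheta k ^ 2 + phi (2 * k) ^ 2 - phi (4 * k) ^ 2) * phi_four_mul_sq_add_oddTheta_sq k

lemma phi_mul_phiNeg_three_add :
    phi k * phiNeg (3 * k) + phiNeg k * phi (3 * k) = 2 * (phiNeg (4 * k) * phiNeg (12 * k)) := by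
  rw [phi_eq_add k, phiNeg_eq_sub k, phi_eq_add (3 * k), phiNeg_eq_sub (3 * k), ← mul_assoc 4 3 k]
  linear_combination (-2) * oddTheta_mul_oddTheta_three_mul k

lemma sq_phi_mul_phiNeg_three_add :
    (phi k * phiNeg (3 * k) + phiNeg k * phi (3 * k)) ^ 2 =
      4 * (phi (2 * k) * phiNeg (2 * k) * (phi (6 * k) * phiNeg (6 * k))) := by
  rw [phi_mul_phiNeg_three_add, phi_mul_phiNeg (2 * k), phi_mul_phiNeg (6 * k),
    show 2 * (2 * k) = 4 * k by ring, show 2 * (6 * k) = 12 * k by ring]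
  ring

end ThetaIdentities

section Descent

lemma eq_zero_of_mul_eq_mul_expand {R : Type*} [CommRing R] [NoZeroDivisors R] {k : ℕ}
    (hk : 1 < k) {a b g : R⟦X⟧} (h : a * g = b * expand k (Nat.ne_zero_of_lt hk) g) (ha : a ≠ 0)
    (hab : a.order ≤ b.order) (hg : constantCoeff g = 0) : g = 0 := by
  by_contra hg0
  have order_eq : a.order + g.order = b.order + k • g.order := by
    simpa only [order_mul, order_expand] using congrArg order h
  obtain ⟨m, hm⟩ := ENat.ne_top_iff_exists.1 (order_eq_top.not.2 ha)
  obtain ⟨n, hn⟩ := ENat.ne_top_iff_exists.1 (order_eq_top.not.2 hg0)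
  have one_le : 1 ≤ n := by
    have := one_le_order_iff_constCoeff_eq_zero.2 hg
    rw [← hn] at this
    exact_mod_cast this
  have order_le : a.order + k • g.order ≤ a.order + g.order :=
    order_eq ▸ add_le_add_left hab _
  rw [← hm, ← hn, nsmul_eq_mul] at order_le
  have : m + k * n ≤ m + n := by exact_mod_cast order_le
  nlinarith

end Descent

section DegreeThree

lemma phi_phiNeg_degree_three_relation :
    phi 1 ^ 4 * phiNeg 3 ^ 4 + phi 3 ^ 4 * phiNeg 1 ^ 4
        + 6 * phi 1 ^ 2 * phi 3 ^ 2 * phiNeg 1 ^ 2 * phiNeg 3 ^ 2 =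
      4 * phi 1 * phi 3 * phiNeg 1 * phiNeg 3 *
        (phi 1 ^ 2 * phi 3 ^ 2 + phiNeg 1 ^ 2 * phiNeg 3 ^ 2) := by
  have cross := sq_phi_mul_phiNeg_three_add 1
  have prod_one := phi_mul_phiNeg 1
  have prod_three := phi_mul_phiNeg 3
  have sq_one := phi_sq_add_phiNeg_sq 1
  have sq_three := phi_sq_add_phiNeg_sq 3
  simp only [mul_one, Nat.reduceMul] at cross prod_one prod_three sq_one sq_three
  calc _ = ((phi 1 * phiNeg 3 + phiNeg 1 * phi 3) ^ 2) ^ 2 -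
        4 * phi 1 ^ 3 * phi 3 * phiNeg 1 * phiNeg 3 ^ 3
        - 4 * phi 1 * phi 3 ^ 3 * phiNeg 1 ^ 3 * phiNeg 3 := by ring
    _ = 4 * ((2 * phi 2 ^ 2) * (2 * phi 6 ^ 2) * phiNeg 2 ^ 2 * phiNeg 6 ^ 2) -
        4 * phi 1 ^ 3 * phi 3 * phiNeg 1 * phiNeg 3 ^ 3
        - 4 * phi 1 * phi 3 ^ 3 * phiNeg 1 ^ 3 * phiNeg 3 := by rw [cross]; ring
    _ = _ := by rw [← sq_one, ← sq_three, ← prod_one, ← prod_three]; ring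

lemma coeff_one_phi_one : coeff 1 (phi 1) = 2 := by
  rw [phi, coeff_one_theta_one]
  rfl

lemma coeff_one_phiNeg_one : coeff 1 (phiNeg 1) = -2 := by
  rw [phiNeg, coeff_one_theta_one]
  rfl

lemma coeff_one_phi_three : coeff 1 (phi 3) = 0 := coeff_theta_of_not_dvd _ _ (by decide)

lemma coeff_one_phiNeg_three : coeff 1 (phiNeg 3) = 0 := coeff_theta_of_not_dvd _ _ (by decide)

lemma expand_two_degree_three_defect :
    expand 2 two_ne_zero (4 * phi 1 * phi 3 * phiNeg 1 * phiNeg 3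
        - (3 * phiNeg 3 ^ 2 - phiNeg 1 ^ 2) * (phiNeg 3 ^ 2 + phiNeg 1 ^ 2)) =
      phi 1 ^ 2 * (phiNeg 3 ^ 2 + phiNeg 1 ^ 2)
        - phi 3 ^ 2 * (3 * phiNeg 3 ^ 2 - phiNeg 1 ^ 2) := by
  have cross := sq_phi_mul_phiNeg_three_add 1
  have prod_one := phi_mul_phiNeg 1
  have prod_three := phi_mul_phiNeg 3
  simp only [map_sub, map_add, map_mul, map_pow, map_ofNat, expand_phi, expand_phiNeg]
  simp only [mul_one, Nat.reduceMul] at cross prod_one prod_three ⊢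
  rw [← prod_one, ← prod_three]
  linear_combination -cross

lemma four_mul_phi_mul_phi_mul_phiNeg_mul_phiNeg :
    4 * phi 1 * phi 3 * phiNeg 1 * phiNeg 3 =
      (3 * phiNeg 3 ^ 2 - phiNeg 1 ^ 2) * (phiNeg 3 ^ 2 + phiNeg 1 ^ 2) := by
  set P := phiNeg 3 ^ 2 + phiNeg 1 ^ 2 with hP
  set Q := 3 * phiNeg 3 ^ 2 - phiNeg 1 ^ 2 with hQ
  set t := phi 1 * phi 3 * (P * Q * phi 1 * phi 3 - 4 * phiNeg 1 ^ 3 * phiNeg 3 ^ 3) with ht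
  set s := phi 1 ^ 2 * phiNeg 3 ^ 4 * Q - phi 3 ^ 2 * phiNeg 1 ^ 4 * P with hs
  have functional_equation : t * (4 * phi 1 * phi 3 * phiNeg 1 * phiNeg 3 - Q * P) =
      s * expand 2 two_ne_zero (4 * phi 1 * phi 3 * phiNeg 1 * phiNeg 3 - Q * P) := by
    rw [expand_two_degree_three_defect]
    linear_combination -P * Q * phi_phiNeg_degree_three_relation
  have coeff_one_ofNat (n : ℕ) [n.AtLeastTwo] : coeff 1 (ofNat(n) : ℤ⟦X⟧) = 0 := by
    rw [← map_ofNat C n, coeff_succ_C]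
  have coeff_one_t : coeff 1 t ≠ 0 := by
    simp [ht, hP, hQ, coeff_one_mul, coeff_one_pow, coeff_one_ofNat, coeff_one_phi_one,
      coeff_one_phi_three, coeff_one_phiNeg_one, coeff_one_phiNeg_three, constantCoeff_phi,
      constantCoeff_phiNeg, map_ofNat]
  have order_t : t.order ≤ 1 := order_le 1 coeff_one_t
  have order_s : 1 ≤ s.order := one_le_order_iff_constCoeff_eq_zero.2 <| by
    simp [hs, hP, hQ, constantCoeff_phi, constantCoeff_phiNeg, map_ofNat]
  refine sub_eq_zero.1 (eq_zero_of_mul_eq_mul_expand one_lt_two functional_equation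
    (fun h => coeff_one_t (by rw [h, map_zero])) (order_t.trans order_s) ?_)
  simp [hP, hQ, constantCoeff_phi, constantCoeff_phiNeg, map_ofNat]

lemma phi_sq_mul_phiNeg_sq_add :
    phi 1 ^ 2 * (phiNeg 3 ^ 2 + phiNeg 1 ^ 2) = phi 3 ^ 2 * (3 * phiNeg 3 ^ 2 - phiNeg 1 ^ 2) := by
  rw [← sub_eq_zero, ← expand_two_degree_three_defect, four_mul_phi_mul_phi_mul_phiNeg_mul_phiNeg,
    sub_self, map_zero]

lemma four_mul_phi_cube_mul_phiNeg_mul_phiNeg :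
    4 * phi 1 ^ 3 * phiNeg 1 * phiNeg 3 = phi 3 * (phiNeg 1 ^ 2 - 3 * phiNeg 3 ^ 2) ^ 2 := by
  have hP : phiNeg 3 ^ 2 + phiNeg 1 ^ 2 ≠ 0 := fun h => by
    simpa [constantCoeff_phiNeg] using congrArg constantCoeff h
  refine mul_left_cancel₀ (mul_ne_zero hP (phi_ne_zero 3)) ?_
  linear_combination 4 * phi 1 * phi 3 * phiNeg 1 * phiNeg 3 * phi_sq_mul_phiNeg_sq_add +
    phi 3 ^ 2 * (3 * phiNeg 3 ^ 2 - phiNeg 1 ^ 2) * four_mul_phi_mul_phi_mul_phiNeg_mul_phiNeg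

lemma four_mul_phiNeg_mul_phiNeg_mul_phi_pow_four_sub :
    4 * phiNeg 1 * phiNeg 3 * (phi 1 ^ 4 - phiNeg 1 ^ 4) =
      (phi 1 * phi 3 - phiNeg 1 * phiNeg 3) * (phiNeg 1 ^ 2 + 3 * phiNeg 3 ^ 2) ^ 2 := by
  refine mul_left_cancel₀ (mul_ne_zero (phiNeg_ne_zero 1) (phiNeg_ne_zero 3)) ?_
  linear_combination
    phi 1 * phiNeg 1 * phiNeg 3 * four_mul_phi_cube_mul_phiNeg_mul_phiNeg -
      3 * phiNeg 1 ^ 2 * phiNeg 3 ^ 2 * four_mul_phi_mul_phi_mul_phiNeg_mul_phiNeg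

end DegreeThree

section GaussIdentity

open Finset

variable {R : Type*} [CommRing R] (q : R)

/-- The `i`-th term, up to sign, of the remainder in the finite form of Gauss's identity
`φ(-q) ∏ (1 + qⁿ) = ∏ (1 - qⁿ)` truncated at `n`. -/
def gaussRemainderTerm (n i : ℕ) : R :=
  q ^ ((i + 1) * (n + 1)) * (∏ k ∈ Ico (i + 1) n, (1 - q ^ (k + 1))) *
    ∏ k ∈ range i, (1 + q ^ (k + 1))

lemma sum_gaussRemainderTerm_succ (n : ℕ) :
    ∑ i ∈ range (n + 1), (-1) ^ (i + 1) * gaussRemainderTerm q (n + 1) i =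
      (1 + q ^ (n + 1)) * ∑ i ∈ range n, (-1) ^ (i + 1) * gaussRemainderTerm q n i
        + q ^ (n + 1) * ∏ k ∈ range n, (1 - q ^ (k + 1))
        - (-1) ^ n * q ^ ((n + 1) ^ 2) * ∏ k ∈ range (n + 1), (1 + q ^ (k + 1)) := by
  set u : ℕ → R := fun i => (-1) ^ i * (q ^ ((i + 1) * (n + 1)) *
    (∏ k ∈ Ico i n, (1 - q ^ (k + 1))) * ∏ k ∈ range i, (1 + q ^ (k + 1))) with hu
  have term_succ : ∀ i ∈ range n, (-1) ^ (i + 1) * gaussRemainderTerm q (n + 1) i =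
      (1 + q ^ (n + 1)) * ((-1) ^ (i + 1) * gaussRemainderTerm q n i) + (u i - u (i + 1)) := by
    intro i hi
    rw [mem_range] at hi
    simp only [hu, gaussRemainderTerm]
    rw [prod_Ico_succ_top (by omega), prod_eq_prod_Ico_succ_bot hi,
      prod_range_succ (fun k => 1 + q ^ (k + 1)) i]
    ring
  have u_zero : u 0 = q ^ (n + 1) * ∏ k ∈ range n, (1 - q ^ (k + 1)) := by
    simp [hu]
  have u_self : u n = (-1) ^ n * (q ^ ((n + 1) ^ 2) * ∏ k ∈ range n, (1 + q ^ (k + 1))) := by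
    simp [hu, sq]
  rw [sum_range_succ, sum_congr rfl term_succ, sum_add_distrib, ← mul_sum, sum_range_sub', u_zero,
    u_self, gaussRemainderTerm, Ico_self, prod_empty, prod_range_succ]
  ring

lemma gauss_identity_truncated (n : ℕ) :
    (1 + 2 * ∑ k ∈ range n, (-1) ^ (k + 1) * q ^ ((k + 1) ^ 2)) * ∏ k ∈ range n, (1 + q ^ (k + 1)) =
      ∏ k ∈ range n, (1 - q ^ (k + 1))
        + 2 * ∑ i ∈ range n, (-1) ^ (i + 1) * gaussRemainderTerm q n i := by
  induction n with
  | zero => simp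
  | succ n ih =>
    rw [sum_gaussRemainderTerm_succ, sum_range_succ, prod_range_succ, prod_range_succ]
    linear_combination (1 + q ^ (n + 1)) * ih

lemma pow_succ_dvd_gaussRemainderTerm (n i : ℕ) : q ^ (n + 1) ∣ gaussRemainderTerm q n i :=
  ((pow_dvd_pow q (Nat.le_mul_of_pos_left _ i.succ_pos)).mul_right _).mul_right _

end GaussIdentity

/-- The product `∏ (1 + e qⁱ)` over the positive integers `i` satisfying `p`: for `e = 1` it is the
generating function of partitions into distinct parts satisfying `p`. -/
noncomputable def partsProd (e : ℤ) (p : ℕ → Prop) [DecidablePred p] : ℤ⟦X⟧ :=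
  ∏' i : ℕ, (1 + if p (i + 1) then C e * X ^ (i + 1) else 0)

section PartsProd

open Filter Topology

variable (e : ℤ) (p : ℕ → Prop) [DecidablePred p]

lemma multipliable_partsProd :
    Multipliable fun i : ℕ => (1 + if p (i + 1) then C e * X ^ (i + 1) else 0 : ℤ⟦X⟧) := by
  refine multipliable_one_add_of_tendsto_order_atTop_nhds_top ℤ ?_
  refine ENat.tendsto_nhds_top_iff_natCast_lt.2 fun n => ?_
  filter_upwards [eventually_ge_atTop n] with i hi
  refine (Nat.cast_lt.2 (Nat.lt_succ_of_le hi)).trans_le (nat_le_order _ _ (X_pow_dvd_iff.1 ?_))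
  split_ifs
  exacts [dvd_mul_left _ _, dvd_zero _]

lemma constantCoeff_partsProd : constantCoeff (partsProd e p) = 1 := by
  rw [partsProd, (multipliable_partsProd e p).map_tprod constantCoeff (continuous_constantCoeff ℤ)]
  convert tprod_one with i
  split_ifs <;> simp

lemma partsProd_ne_zero : partsProd e p ≠ 0 :=
  ne_of_apply_ne constantCoeff (by simp [constantCoeff_partsProd])

lemma expand_partsProd_true (k : ℕ) [NeZero k] :
    expand k (NeZero.ne k) (partsProd e fun _ => True) = partsProd e (k ∣ ·) := by
  have hk : 0 < k := NeZero.pos k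
  have sub_one_add_one (i : ℕ) : k * (i + 1) - 1 + 1 = k * (i + 1) :=
    Nat.sub_add_cancel (Nat.mul_pos hk i.succ_pos)
  have index_injective : Function.Injective fun i : ℕ => k * (i + 1) - 1 := fun i j h => by
    have h' := congrArg (· + 1) h
    simp only [sub_one_add_one] at h'
    exact Nat.succ_injective (Nat.eq_of_mul_eq_mul_left hk h')
  rw [partsProd, (multipliable_partsProd e fun _ => True).map_tprod _
    (continuous_expand k (NeZero.ne k)), partsProd]
  refine .trans ?_ (index_injective.tprod_eq ?_)
  · refine tprod_congr fun i => ?_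
    rw [sub_one_add_one]
    simp [← pow_mul]
  · intro i hi
    obtain ⟨c, hc⟩ : k ∣ i + 1 := by_contra fun h => hi (by simp [h])
    cases c with
    | zero => simp at hc
    | succ c => exact ⟨c, (congrArg (· - 1) hc).symm⟩

lemma partsProd_true_mul_partsProd_lcm (ℓ μ : ℕ) :
    (partsProd e fun _ => True) * partsProd e (ℓ.lcm μ ∣ ·) =
      partsProd e (fun i => ¬ ℓ ∣ i ∧ ¬ μ ∣ i) * (partsProd e (ℓ ∣ ·) * partsProd e (μ ∣ ·)) := by
  have multipliable_ℓ := multipliable_partsProd e (ℓ ∣ ·)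
  have multipliable_μ := multipliable_partsProd e (μ ∣ ·)
  simp only [partsProd]
  rw [← multipliable_ℓ.tprod_mul multipliable_μ,
    ← (multipliable_partsProd e fun i => ¬ ℓ ∣ i ∧ ¬ μ ∣ i).tprod_mul
      (multipliable_ℓ.mul multipliable_μ),
    ← (multipliable_partsProd e fun _ => True).tprod_mul (multipliable_partsProd e (ℓ.lcm μ ∣ ·))]
  refine tprod_congr fun i => ?_
  by_cases hℓ : ℓ ∣ i + 1 <;> by_cases hμ : μ ∣ i + 1 <;> simp [Nat.lcm_dvd_iff, hℓ, hμ]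

lemma tendsto_phiNeg_one : Tendsto (fun n => (1 + 2 * ∑ k ∈ Finset.range n,
    (-1) ^ (k + 1) * X ^ ((k + 1) ^ 2) : ℤ⟦X⟧)) atTop (𝓝 (phiNeg 1)) := by
  have symmetric_sums := ((summable_theta (fun m => (m.negOnePow : ℤ)) 1).hasSum.nat_add_neg
    |>.tendsto_sum_nat).comp (tendsto_add_atTop_nat 1) |>.sub_const 1
  have pair_terms (k : ℕ) : monomial (1 * (k : ℤ).natAbs ^ 2) ((k : ℤ).negOnePow : ℤ) +
      monomial (1 * (-k : ℤ).natAbs ^ 2) ((-k : ℤ).negOnePow : ℤ) =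
        (2 * ((-1) ^ k * X ^ k ^ 2) : ℤ⟦X⟧) := by
    rw [Int.natAbs_neg, Int.natAbs_natCast, Int.negOnePow_neg, Int.coe_negOnePow_natCast, one_mul,
      ← mul_one ((-1 : ℤ) ^ k), ← smul_eq_mul, map_smul, ← X_pow_eq, zsmul_eq_mul, ← two_mul]
    push_cast
    rfl
  convert! symmetric_sums using 2 with n
  · simp only [Function.comp_apply, pair_terms, Finset.sum_range_succ' _ n, ← Finset.mul_sum]
    ring
  · simp [phiNeg, theta]

lemma phiNeg_mul_partsProd_true :
    phiNeg 1 * partsProd 1 (fun _ => True) = partsProd (-1) fun _ => True := by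
  have tendsto_prod (e : ℤ) := (multipliable_partsProd e fun _ => True).hasProd.tendsto_prod_nat
  simp only [if_true] at tendsto_prod
  have tendsto_sub := (tendsto_phiNeg_one.mul (tendsto_prod 1)).sub (tendsto_prod (-1))
  refine sub_eq_zero.1 <| tendsto_nhds_unique tendsto_sub <|
    (tendsto_iff_coeff_tendsto ..).2 fun d => ?_
  refine tendsto_const_nhds.congr' ?_
  filter_upwards [eventually_ge_atTop d] with n hn
  simp only [map_neg, map_one, one_mul, neg_one_mul, ← sub_eq_add_neg, gauss_identity_truncated,
    add_sub_cancel_left]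
  refine (X_pow_dvd_iff.1 (Dvd.dvd.mul_left (Finset.dvd_sum fun i _ => ?_) _) d
    (Nat.lt_succ_of_le hn)).symm
  exact (pow_succ_dvd_gaussRemainderTerm _ _ _).mul_left _

lemma phiNeg_mul_partsProd_dvd (k : ℕ) [NeZero k] :
    phiNeg k * partsProd 1 (k ∣ ·) = partsProd (-1) (k ∣ ·) := by
  simpa only [map_mul, expand_phiNeg, mul_one, expand_partsProd_true] using
    congrArg (expand k (NeZero.ne k)) phiNeg_mul_partsProd_true

end PartsProd

/-- The generating function `∑ R̄_{ℓ,μ}(n) qⁿ` of regular overpartitions. -/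
noncomputable def rbarSeries (ℓ μ : ℕ) : ℤ⟦X⟧ := mk fun n => (Rbar ℓ μ n : ℤ)

section GeneratingFunctions

variable (ℓ μ : ℕ)

lemma rbarSeries_eq_mul : rbarSeries ℓ μ =
    (mk fun n => (regularCount ℓ μ n : ℤ)) * mk fun n => (regularDistinctCount ℓ μ n : ℤ) := by
  ext n
  simp only [rbarSeries, coeff_mk, coeff_mul, Rbar, Nat.cast_sum, Nat.cast_mul]

lemma mk_regularCount_mul_partsProd :
    (mk fun n => (regularCount ℓ μ n : ℤ)) * partsProd (-1) (fun i => ¬ ℓ ∣ i ∧ ¬ μ ∣ i) = 1 := by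
  have card_restricted (n : ℕ) :
      regularCount ℓ μ n = (Nat.Partition.restricted n fun i => ¬ ℓ ∣ i ∧ ¬ μ ∣ i).card :=
    Fintype.card_subtype _
  have hasProd_regular := (Nat.Partition.hasProd_powerSeriesMk_card_restricted ℤ
    fun i => ¬ ℓ ∣ i ∧ ¬ μ ∣ i).mul
      (multipliable_partsProd (-1) fun i => ¬ ℓ ∣ i ∧ ¬ μ ∣ i).hasProd
  simp only [card_restricted, partsProd]
  refine hasProd_regular.unique ?_
  convert! hasProd_one using 2 with i
  split_ifs
  · have geometric_sum := tsum_pow_mul_one_sub_of_constantCoeff_eq_zero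
      (f := (X : ℤ⟦X⟧) ^ (i + 1)) (by simp)
    simp only [pow_mul, map_neg, map_one]
    linear_combination geometric_sum
  · simp

lemma nodup_and_forall_mem_iff (s : Multiset ℕ) : (s.Nodup ∧ ∀ i ∈ s, ¬ ℓ ∣ i ∧ ¬ μ ∣ i) ↔
    ∀ i ∈ s, s.count i ≤ 1 ∧ ¬ ℓ ∣ i ∧ ¬ μ ∣ i := by
  rw [Multiset.nodup_iff_count_le_one]
  grind [Multiset.count_eq_zero]

lemma mk_regularDistinctCount : (mk fun n => (regularDistinctCount ℓ μ n : ℤ)) =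
    partsProd 1 fun i => ¬ ℓ ∣ i ∧ ¬ μ ∣ i := by
  have genFun_eq : Nat.Partition.genFun
      (fun i c => if c ≤ 1 ∧ ¬ ℓ ∣ i ∧ ¬ μ ∣ i then (1 : ℤ) else 0) =
        mk fun n => (regularDistinctCount ℓ μ n : ℤ) := by
    ext n
    rw [Nat.Partition.coeff_genFun, coeff_mk, regularDistinctCount, Fintype.card_subtype]
    simp_rw [Finsupp.prod, Finset.prod_boole, Finset.sum_boole, nodup_and_forall_mem_iff,
      Multiset.toFinsupp_support, Multiset.toFinsupp_apply, Multiset.mem_toFinset]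
  rw [← genFun_eq, Nat.Partition.genFun_eq_tprod, partsProd]
  refine tprod_congr fun i => ?_
  rw [tsum_eq_single 0 fun c hc => by simp [hc, smul_eq_C_mul]]
  split_ifs <;> simp_all [smul_eq_C_mul]

theorem rbarSeries_mul_phiNeg_mul_phiNeg_lcm [NeZero ℓ] [NeZero μ] :
    rbarSeries ℓ μ * phiNeg 1 * phiNeg (ℓ.lcm μ) = phiNeg ℓ * phiNeg μ := by
  have : NeZero (ℓ.lcm μ) := ⟨Nat.lcm_ne_zero (NeZero.ne ℓ) (NeZero.ne μ)⟩
  have pos := partsProd_true_mul_partsProd_lcm 1 ℓ μ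
  have neg := partsProd_true_mul_partsProd_lcm (-1) ℓ μ
  rw [← phiNeg_mul_partsProd_true] at neg
  simp only [← phiNeg_mul_partsProd_dvd] at neg
  rw [rbarSeries_eq_mul, mk_regularDistinctCount]
  refine mul_right_cancel₀ (mul_ne_zero (partsProd_ne_zero 1 fun _ => True)
    (partsProd_ne_zero 1 (ℓ.lcm μ ∣ ·))) ?_
  set A := mk fun n => (regularCount ℓ μ n : ℤ)
  set B := partsProd 1 fun i => ¬ ℓ ∣ i ∧ ¬ μ ∣ i
  linear_combination A * B * neg + B * phiNeg ℓ * phiNeg μ * partsProd 1 (ℓ ∣ ·) *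
    partsProd 1 (μ ∣ ·) * mk_regularCount_mul_partsProd ℓ μ - phiNeg ℓ * phiNeg μ * pos

end GeneratingFunctions

/-- The power series whose exponents all lie in the residue class `r` modulo `d`. These submodules
grade the `d`-dissections of power series by `ZMod d`. -/
def residuePart (R : Type*) [CommSemiring R] (d : ℕ) (r : ZMod d) : Submodule R R⟦X⟧ where
  carrier := {f | ∀ n : ℕ, (n : ZMod d) ≠ r → coeff n f = 0}
  zero_mem' n _ := map_zero _
  add_mem' hf hg n hn := by rw [map_add, hf n hn, hg n hn, add_zero]
  smul_mem' a f hf n hn := by rw [coeff_smul, hf n hn, smul_zero]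

/-- The component `∑ aₙ qⁿ ↦ ∑ a_{dn+r} qⁿ` of the `d`-dissection of a power series. -/
noncomputable def dissection {R : Type*} [CommSemiring R] (d r : ℕ) : R⟦X⟧ →ₗ[R] R⟦X⟧ where
  toFun f := mk fun n => coeff (d * n + r) f
  map_add' f g := by ext; simp only [map_add, coeff_mk]
  map_smul' a f := by ext; simp only [map_smul, coeff_mk, RingHom.id_apply]

section Dissection

variable {R : Type*} [CommSemiring R] {d r : ℕ} {s : ZMod d}

lemma mem_residuePart_iff {f : R⟦X⟧} :
    f ∈ residuePart R d s ↔ ∀ n : ℕ, (n : ZMod d) ≠ s → coeff n f = 0 := Iff.rfl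

instance : SetLike.GradedMonoid (residuePart R d) where
  one_mem := mem_residuePart_iff.2 fun n hn => by
    rw [coeff_one, if_neg]
    rintro rfl
    exact hn Nat.cast_zero
  mul_mem s t f g hf hg := mem_residuePart_iff.2 fun n hn => by
    refine (coeff_mul n f g).trans (Finset.sum_eq_zero fun p hp => ?_)
    rw [Finset.HasAntidiagonal.mem_antidiagonal] at hp
    by_cases hs : (p.1 : ZMod d) = s
    · have ht : (p.2 : ZMod d) ≠ t := fun ht => hn (by rw [← hp, Nat.cast_add, hs, ht])
      rw [hg _ ht, mul_zero]
    · rw [hf _ hs, zero_mul]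

lemma map_mem_residuePart {S : Type*} [CommSemiring S] (φ : R →+* S) {f : R⟦X⟧}
    (hf : f ∈ residuePart R d s) : map φ f ∈ residuePart S d s :=
  fun n hn => by rw [coeff_map, hf n hn, map_zero]

lemma coeff_dissection (n : ℕ) (f : R⟦X⟧) : coeff n (dissection d r f) = coeff (d * n + r) f :=
  coeff_mk n fun n => coeff (d * n + r) f

lemma map_dissection {S : Type*} [CommSemiring S] (φ : R →+* S) (f : R⟦X⟧) :
    map φ (dissection d r f) = dissection d r (map φ f) := by
  ext n
  simp only [coeff_map, coeff_dissection]

lemma dissection_eq_zero {f : R⟦X⟧} (hf : f ∈ residuePart R d s) (hr : (r : ZMod d) ≠ s) :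
    dissection d r f = 0 := by
  ext n
  rw [coeff_dissection, map_zero, hf]
  simpa using hr

end Dissection

section DissectionExpand

variable {R : Type*} [CommRing R] {d r : ℕ}

lemma expand_mem_residuePart (hd : d ≠ 0) (f : R⟦X⟧) : expand d hd f ∈ residuePart R d 0 :=
  fun _ hn => coeff_expand_of_not_dvd _ _ _ (mt (ZMod.natCast_eq_zero_iff _ _).2 hn)

lemma dissection_mul_expand (hr : r < d) (f g : R⟦X⟧) :
    dissection d r (f * expand d (Nat.ne_zero_of_lt hr) g) = dissection d r f * g := by
  have hd : 0 < d := hr.pos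
  ext n
  rw [coeff_dissection, coeff_mul, coeff_mul]
  refine (Finset.sum_of_injOn (fun p : ℕ × ℕ => (d * p.1 + r, d * p.2)) ?_ ?_ ?_ ?_).symm
  · rintro ⟨a, b⟩ _ ⟨a', b'⟩ _ h
    simp only [Prod.mk.injEq, Nat.add_right_cancel_iff, Nat.mul_right_inj hd.ne'] at h
    exact Prod.ext h.1 h.2
  · rintro ⟨a, b⟩ h
    simp only [Finset.mem_coe, Finset.HasAntidiagonal.mem_antidiagonal] at h ⊢
    rw [← h]
    ring
  · rintro ⟨a, b⟩ hab hnotMem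
    rw [Finset.HasAntidiagonal.mem_antidiagonal] at hab
    rw [coeff_expand_of_not_dvd _ _ _ ?_, mul_zero]
    rintro ⟨c, rfl⟩
    have hcn : c ≤ n := Nat.le_of_lt_succ (Nat.lt_of_mul_lt_mul_left (a := d) (by lia))
    refine hnotMem ⟨(n - c, c), by simp [hcn], Prod.ext ?_ rfl⟩
    have := Nat.mul_sub d n c
    have := Nat.mul_le_mul_left d hcn
    dsimp only at hab ⊢
    lia
  · intro p _
    rw [coeff_dissection, coeff_expand_mul]

lemma dissection_expand (hd : d ≠ 0) (f : R⟦X⟧) : dissection d 0 (expand d hd f) = f := by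
  ext n
  rw [coeff_dissection, add_zero, coeff_expand_mul]

lemma X_pow_mul_expand_dissection {f : R⟦X⟧} (hr : r < d) (hf : f ∈ residuePart R d r) :
    X ^ r * expand d (Nat.ne_zero_of_lt hr) (dissection d r f) = f := by
  ext n
  rw [coeff_X_pow_mul', coeff_expand]
  by_cases hn : (n : ZMod d) = r
  · have hmod : r ≡ n [MOD d] := ((ZMod.natCast_eq_natCast_iff ..).1 hn).symm
    have hrn : r ≤ n := by
      rw [← Nat.mod_eq_of_lt hr, hmod]
      exact Nat.mod_le n d
    have hdvd : d ∣ n - r := (Nat.modEq_iff_dvd' hrn).1 hmod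
    rw [if_pos hrn, if_pos hdvd, coeff_dissection, Nat.mul_div_cancel' hdvd, Nat.sub_add_cancel hrn]
  · rw [hf n hn]
    split_ifs with hrn hdvd
    · exact absurd ((ZMod.natCast_eq_natCast_iff ..).2 ((Nat.modEq_iff_dvd' hrn).2 hdvd).symm) hn
    all_goals rfl

lemma expand_dissection_zero (hd : d ≠ 0) {f : R⟦X⟧} (hf : f ∈ residuePart R d 0) :
    expand d hd (dissection d 0 f) = f := by
  simpa using X_pow_mul_expand_dissection (Nat.pos_of_ne_zero hd) (Nat.cast_zero (R := ZMod d) ▸ hf)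

end DissectionExpand

section ThetaResidue

lemma theta_mem_residuePart {w : ℤ → ℤ} {d k : ℕ} [NeZero k]
    {s : ZMod d} (hw : ∀ m : ℤ, w m ≠ 0 → ((k * m ^ 2 : ℤ) : ZMod d) = s) :
    theta w k ∈ residuePart ℤ d s := by
  intro n hn
  rw [coeff_theta]
  refine (tsum_congr fun m => ?_).trans tsum_zero
  refine ite_eq_right_iff.2 fun hm => by_contra fun h => hn ?_
  rw [← hw m h, hm, ← Int.natAbs_sq]
  norm_cast

lemma theta_mul_mem_residuePart (w : ℤ → ℤ) (d k : ℕ) [NeZero d] [NeZero k] :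
    theta w (d * k) ∈ residuePart ℤ d 0 := by
  rw [← expand_theta]
  exact expand_mem_residuePart _ _

lemma oddTheta_mem_residuePart {d : ℕ} (hd : d ∣ 8) (k : ℕ) [NeZero k] :
    oddTheta k ∈ residuePart ℤ d k := by
  refine theta_mem_residuePart fun m hm => ?_
  have eight_dvd : 8 ∣ m ^ 2 - 1 :=
    Int.eight_dvd_sq_sub_one_of_odd (by_contra fun h => hm (if_neg h))
  have sq_eq_one : ((m ^ 2 : ℤ) : ZMod d) = (1 : ℤ) :=
    ((ZMod.intCast_eq_intCast_iff_dvd_sub ..).2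
      ((Int.natCast_dvd_natCast.2 hd).trans eight_dvd)).symm
  rw [Int.cast_mul, sq_eq_one, Int.cast_natCast, Int.cast_one, mul_one]

end ThetaResidue

section FourDissection

lemma rbarSeries_four_nine_mul :
    rbarSeries 4 9 * phiNeg 36 * phiNeg 4 ^ 3 = phi 1 * phi 2 ^ 2 * phiNeg 9 := by
  have product : rbarSeries 4 9 * phiNeg 1 * phiNeg 36 = phiNeg 4 * phiNeg 9 :=
    rbarSeries_mul_phiNeg_mul_phiNeg_lcm 4 9
  refine mul_right_cancel₀ (phiNeg_ne_zero 1) ?_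
  linear_combination phiNeg 4 ^ 3 * product
    - phiNeg 9 * (phi 2 * phiNeg 2 + phiNeg 4 ^ 2) * phi_mul_phiNeg 2
    - phi 2 ^ 2 * phiNeg 9 * phi_mul_phiNeg 1

lemma dissection_four_phi_one_mul_phi_two_sq_mul_phiNeg_nine :
    dissection 4 0 (phi 1 * phi 2 ^ 2 * phiNeg 9) =
      phi 1 ^ 3 * phi 9 - dissection 4 0 (oddTheta 1 ^ 3 * oddTheta 9) := by
  have phi_four : phi 4 ∈ residuePart ℤ 4 0 := theta_mul_mem_residuePart 1 4 1
  have phi_nine : phi 36 ∈ residuePart ℤ 4 0 := theta_mul_mem_residuePart 1 4 9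
  have odd_one : oddTheta 1 ∈ residuePart ℤ 4 1 := oddTheta_mem_residuePart (by decide) 1
  have odd_nine : oddTheta 9 ∈ residuePart ℤ 4 1 := oddTheta_mem_residuePart (by decide) 9
  have phi_four_pow (i : ℕ) := SetLike.pow_mem_graded i phi_four
  have odd_one_pow (i : ℕ) := SetLike.pow_mem_graded i odd_one
  have part_one : phi 4 ^ 2 * oddTheta 1 * phi 36 - phi 4 ^ 3 * oddTheta 9 ∈ residuePart ℤ 4 1 :=
    sub_mem (SetLike.mul_mem_graded (SetLike.mul_mem_graded (phi_four_pow 2) odd_one) phi_nine)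
      (SetLike.mul_mem_graded (phi_four_pow 3) odd_nine)
  have part_two : phi 4 * oddTheta 1 ^ 2 * phi 36 - phi 4 ^ 2 * oddTheta 1 * oddTheta 9 ∈
      residuePart ℤ 4 2 :=
    sub_mem (SetLike.mul_mem_graded (SetLike.mul_mem_graded phi_four (odd_one_pow 2)) phi_nine)
      (SetLike.mul_mem_graded (SetLike.mul_mem_graded (phi_four_pow 2) odd_one) odd_nine)
  have part_three : oddTheta 1 ^ 3 * phi 36 - phi 4 * oddTheta 1 ^ 2 * oddTheta 9 ∈
      residuePart ℤ 4 3 :=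
    sub_mem (SetLike.mul_mem_graded (odd_one_pow 3) phi_nine)
      (SetLike.mul_mem_graded (SetLike.mul_mem_graded phi_four (odd_one_pow 2)) odd_nine)
  have dissected : phi 1 * phi 2 ^ 2 * phiNeg 9 =
      expand 4 four_ne_zero (phi 1 ^ 3 * phi 9) - oddTheta 1 ^ 3 * oddTheta 9 +
        (phi 4 ^ 2 * oddTheta 1 * phi 36 - phi 4 ^ 3 * oddTheta 9) +
        (phi 4 * oddTheta 1 ^ 2 * phi 36 - phi 4 ^ 2 * oddTheta 1 * oddTheta 9) +
        (oddTheta 1 ^ 3 * phi 36 - phi 4 * oddTheta 1 ^ 2 * oddTheta 9) := by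
    rw [map_mul, map_pow, expand_phi 4 1, expand_phi 4 9, phi_eq_add 1, phiNeg_eq_sub 9,
      ← phi_four_mul_sq_add_oddTheta_sq 1]
    ring
  rw [dissected, map_add, map_add, map_add, map_sub, dissection_expand,
    dissection_eq_zero part_one (by decide), dissection_eq_zero part_two (by decide),
    dissection_eq_zero part_three (by decide), add_zero, add_zero, add_zero]

lemma dissection_four_rbarSeries_mul :
    dissection 4 0 (rbarSeries 4 9) * phiNeg 9 * phiNeg 1 ^ 3 =
      phi 1 ^ 3 * phi 9 - dissection 4 0 (oddTheta 1 ^ 3 * oddTheta 9) := by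
  have expanded : phi 1 * phi 2 ^ 2 * phiNeg 9 =
      rbarSeries 4 9 * expand 4 four_ne_zero (phiNeg 9 * phiNeg 1 ^ 3) := by
    rw [map_mul, map_pow, expand_phiNeg 4 1, expand_phiNeg 4 9, ← mul_assoc]
    exact rbarSeries_four_nine_mul.symm
  rw [← dissection_four_phi_one_mul_phi_two_sq_mul_phiNeg_nine, expanded,
    dissection_mul_expand four_pos, mul_assoc]

lemma dissection_four_oddTheta_cube_mul_oddTheta_mul :
    dissection 4 0 (oddTheta 1 ^ 3 * oddTheta 9) * (phi 1 * phi 3 - phiNeg 1 * phiNeg 3) =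
      (phi 1 ^ 4 - phiNeg 1 ^ 4) * (phi 3 * phi 9 - phiNeg 3 * phiNeg 9) := by
  rw [← dissection_mul_expand four_pos,
    ← dissection_expand four_ne_zero ((phi 1 ^ 4 - phiNeg 1 ^ 4) * _)]
  congr 1
  have product_one := oddTheta_mul_oddTheta_three_mul 1
  have product_three := oddTheta_mul_oddTheta_three_mul 3
  have pow_four := oddTheta_pow_four 1
  simp only [map_mul, map_sub, map_pow, expand_phi, expand_phiNeg, Nat.reduceMul, mul_one]
    at product_one product_three pow_four ⊢
  rw [← product_one, ← product_three, ← pow_four]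
  ring

lemma four_mul_phiNeg_mul_phiNeg_mul_dissection_four :
    4 * phiNeg 1 * phiNeg 3 * dissection 4 0 (oddTheta 1 ^ 3 * oddTheta 9) =
      (phiNeg 1 ^ 2 + 3 * phiNeg 3 ^ 2) ^ 2 * (phi 3 * phi 9 - phiNeg 3 * phiNeg 9) := by
  have phi_mul_phi_sub_ne_zero : phi 1 * phi 3 - phiNeg 1 * phiNeg 3 ≠ 0 := fun h => by
    simpa [coeff_one_mul, coeff_one_phi_one, coeff_one_phi_three, coeff_one_phiNeg_one,
      coeff_one_phiNeg_three, constantCoeff_phi, constantCoeff_phiNeg] using congrArg (coeff 1) h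
  refine mul_right_cancel₀ phi_mul_phi_sub_ne_zero ?_
  linear_combination
    4 * phiNeg 1 * phiNeg 3 * dissection_four_oddTheta_cube_mul_oddTheta_mul
    + (phi 3 * phi 9 - phiNeg 3 * phiNeg 9) * four_mul_phiNeg_mul_phiNeg_mul_phi_pow_four_sub

lemma four_mul_dissection_four_rbarSeries_mul :
    4 * dissection 4 0 (rbarSeries 4 9) * phiNeg 9 * phiNeg 1 ^ 4 =
      phiNeg 9 * (phiNeg 1 ^ 2 + 3 * phiNeg 3 ^ 2) ^ 2 -
        12 * phiNeg 1 ^ 2 * phiNeg 3 * phi 3 * phi 9 := by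
  refine mul_right_cancel₀ (phiNeg_ne_zero 3) ?_
  linear_combination 4 * phiNeg 1 * phiNeg 3 * dissection_four_rbarSeries_mul
    - four_mul_phiNeg_mul_phiNeg_mul_dissection_four
    + phi 9 * four_mul_phi_cube_mul_phiNeg_mul_phiNeg

end FourDissection

section ThreeDissection

/-- The terms of `φ(-q)` whose exponent is not divisible by `3`. -/
noncomputable def phiNegTail : ℤ⟦X⟧ := phiNeg 1 - phiNeg 9

/-- The product `φ(-ωq) φ(-ω²q)` for a primitive cube root of unity `ω`, written rationally by
means of the `3`-dissection `φ(-q) = φ(-q⁹) + phiNegTail`. -/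
noncomputable def phiNegCofactor : ℤ⟦X⟧ :=
  phiNeg 9 ^ 2 - phiNeg 9 * phiNegTail + phiNegTail ^ 2

/-- The norm `φ(-q) φ(-ωq) φ(-ω²q)` of `φ(-q)`, as a series in `q³`. -/
noncomputable def phiNegNorm : ℤ⟦X⟧ := dissection 3 0 (phiNeg 9 ^ 3 + phiNegTail ^ 3)

lemma phiNeg_nine_mul_eq_theta (k : ℕ) :
    phiNeg (9 * k) = theta (fun m => if 3 ∣ m then (m.negOnePow : ℤ) else 0) k := by
  rw [theta_eq_of_support_dvd (d := 3), phiNeg]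
  · congr 1
    funext m
    rw [Nat.cast_ofNat, if_pos (dvd_mul_right 3 m), Units.val_inj, Int.negOnePow_eq_iff]
    exact ⟨-m, by ring⟩
  · exact fun m hm => if_neg hm

lemma phiNegTail_mem_residuePart : phiNegTail ∈ residuePart ℤ 3 1 := by
  rw [phiNegTail, phiNeg_nine_mul_eq_theta 1, phiNeg, ← theta_sub]
  refine theta_mem_residuePart fun m hm => ?_
  have not_dvd : ¬ 3 ∣ m := fun h => hm (by rw [Pi.sub_apply, if_pos h, sub_self])
  have : (m : ZMod 3) ≠ 0 := mt (ZMod.intCast_zmod_eq_zero_iff_dvd m 3).1 not_dvd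
  push_cast
  rw [one_mul]
  generalize (m : ZMod 3) = a at *
  decide +revert

lemma phiNeg_nine_mem_residuePart : phiNeg 9 ∈ residuePart ℤ 3 0 := theta_mul_mem_residuePart _ 3 3

lemma expand_phiNegNorm :
    expand 3 three_ne_zero phiNegNorm = phiNeg 1 * phiNegCofactor := by
  rw [phiNegNorm, expand_dissection_zero, phiNegCofactor, phiNegTail]
  · ring
  · exact add_mem (SetLike.pow_mem_graded 3 phiNeg_nine_mem_residuePart)
      (SetLike.pow_mem_graded 3 phiNegTail_mem_residuePart)

lemma constantCoeff_phiNegNorm : constantCoeff phiNegNorm = 1 := by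
  rw [← constantCoeff_expand 3 three_ne_zero, expand_phiNegNorm, phiNegCofactor, phiNegTail]
  simp [constantCoeff_phiNeg]

lemma dissection_three_phiNegCofactor_sq :
    dissection 3 2 (phiNegCofactor ^ 2) =
      3 * (phiNeg 3 ^ 2 * dissection 3 2 (phiNegTail ^ 2)) := by
  have tail := phiNegTail_mem_residuePart
  have nine := phiNeg_nine_mem_residuePart
  have tail_pow (i : ℕ) := SetLike.pow_mem_graded i tail
  have nine_pow (i : ℕ) := SetLike.pow_mem_graded i nine
  have part_zero : phiNeg 9 ^ 4 - 2 • (phiNeg 9 * phiNegTail ^ 3) ∈ residuePart ℤ 3 0 :=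
    sub_mem (nine_pow 4) (nsmul_mem (SetLike.mul_mem_graded nine (tail_pow 3)) 2)
  have part_one : phiNegTail ^ 4 - 2 • (phiNeg 9 ^ 3 * phiNegTail) ∈ residuePart ℤ 3 1 :=
    sub_mem (tail_pow 4) (nsmul_mem (SetLike.mul_mem_graded (nine_pow 3) tail) 2)
  have dissected : phiNegCofactor ^ 2 =
      (phiNeg 9 ^ 4 - 2 • (phiNeg 9 * phiNegTail ^ 3)) +
        (phiNegTail ^ 4 - 2 • (phiNeg 9 ^ 3 * phiNegTail)) +
        3 • (phiNegTail ^ 2 * expand 3 three_ne_zero (phiNeg 3 ^ 2)) := by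
    rw [phiNegCofactor, map_pow, expand_phiNeg 3 3]
    ring
  rw [dissected, map_add, map_add, dissection_eq_zero part_zero (by decide),
    dissection_eq_zero part_one (by decide), map_nsmul, dissection_mul_expand (by decide)]
  ring

lemma four_mul_dissection_four_rbarSeries_mul_expand :
    4 • (dissection 4 0 (rbarSeries 4 9) * expand 3 three_ne_zero (phiNeg 3 * phiNegNorm ^ 4)) +
        12 • (phiNegCofactor ^ 2 *
          expand 3 three_ne_zero (phiNegNorm ^ 2 * phiNeg 1 * phi 1 * phi 3)) =
      expand 3 three_ne_zero (phiNeg 3 * phiNegNorm ^ 4) +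
        6 • (phiNegCofactor ^ 2 *
          expand 3 three_ne_zero (phiNeg 3 * phiNegNorm ^ 2 * phiNeg 1 ^ 2)) +
        9 • (phiNegCofactor ^ 4 * expand 3 three_ne_zero (phiNeg 3 * phiNeg 1 ^ 4)) := by
  simp only [map_mul, map_pow, expand_phiNegNorm, expand_phi, expand_phiNeg, Nat.reduceMul]
  linear_combination phiNegCofactor ^ 4 * four_mul_dissection_four_rbarSeries_mul

lemma four_mul_dissection_three_dissection_four_rbarSeries_mul :
    4 * dissection 3 2 (dissection 4 0 (rbarSeries 4 9)) * (phiNeg 3 * phiNegNorm ^ 4) =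
      9 * (phiNeg 1 ^ 4 * phiNeg 3 * dissection 3 2 (phiNegCofactor ^ 4) +
        2 * phiNegNorm ^ 2 * phiNeg 3 ^ 2 * dissection 3 2 (phiNegTail ^ 2) *
          (phiNeg 1 ^ 2 * phiNeg 3 - 2 * phiNeg 1 * phi 1 * phi 3)) := by
  have dissected := congrArg (dissection 3 2) four_mul_dissection_four_rbarSeries_mul_expand
  simp only [map_add, map_nsmul, dissection_mul_expand (show 2 < 3 by decide),
    dissection_three_phiNegCofactor_sq,
    dissection_eq_zero (r := 2) (expand_mem_residuePart three_ne_zero _) (by decide)] at dissected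
  linear_combination dissected

end ThreeDissection

section ModThree

lemma expand_eq_pow {p : ℕ} [Fact p.Prime] (f : (ZMod p)⟦X⟧) :
    expand p (NeZero.ne p) f = f ^ p := by
  have frobenius := MvPowerSeries.map_frobenius_expand p (NeZero.ne p) (f := f)
  rwa [ZMod.frobenius_zmod, MvPowerSeries.map_id] at frobenius

/-- Reduction modulo `3` of the coefficients of a power series. -/
noncomputable abbrev modThree : ℤ⟦X⟧ →+* (ZMod 3)⟦X⟧ := map (Int.castRingHom (ZMod 3))

lemma three_eq_zero_modThree : (3 : (ZMod 3)⟦X⟧) = 0 := by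
  rw [← map_ofNat C 3, show (OfNat.ofNat 3 : ZMod 3) = 0 from rfl, map_zero]

lemma modThree_expand_three (f : ℤ⟦X⟧) : modThree (expand 3 three_ne_zero f) = modThree f ^ 3 := by
  rw [map_expand, expand_eq_pow]

lemma modThree_phiNeg_three_mul (k : ℕ) [NeZero k] :
    modThree (phiNeg (3 * k)) = modThree (phiNeg k) ^ 3 := by
  rw [← expand_phiNeg, modThree_expand_three]

lemma modThree_phi_three_mul (k : ℕ) [NeZero k] :
    modThree (phi (3 * k)) = modThree (phi k) ^ 3 := by
  rw [← expand_phi, modThree_expand_three]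

lemma constantCoeff_modThree (f : ℤ⟦X⟧) :
    constantCoeff (modThree f) = ((constantCoeff f : ℤ) : ZMod 3) := by
  rw [← coeff_zero_eq_constantCoeff_apply, coeff_map, coeff_zero_eq_constantCoeff_apply,
    eq_intCast]

lemma modThree_phiNeg_one_ne_zero : modThree (phiNeg 1) ≠ 0 := fun h => by
  simpa [constantCoeff_modThree, constantCoeff_phiNeg] using congrArg constantCoeff h

lemma modThree_phi_pow_four_add_phiNeg_pow_four :
    modThree (phi 1) ^ 4 + modThree (phiNeg 1) ^ 4 = 2 := by
  have duplication : phi 1 ^ 4 + phiNeg 1 ^ 4 = 4 * phi 2 ^ 4 - 2 * phiNeg 2 ^ 4 := by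
    linear_combination (phi 1 ^ 2 + phiNeg 1 ^ 2 + 2 * phi 2 ^ 2) * phi_sq_add_phiNeg_sq 1
      - 2 * (phi 1 * phiNeg 1 + phiNeg 2 ^ 2) * phi_mul_phiNeg 1
  have fixed : 1 * modThree (phi 1 ^ 4 + phiNeg 1 ^ 4 - 2) =
      1 * expand 2 two_ne_zero (modThree (phi 1 ^ 4 + phiNeg 1 ^ 4 - 2)) := by
    rw [← map_expand, map_sub (expand ..), map_add (expand ..)]
    simp only [map_pow (expand ..), map_ofNat (expand ..), expand_phi, expand_phiNeg,
      Nat.reduceMul]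
    rw [duplication]
    simp only [map_add, map_sub, map_mul, map_pow, map_ofNat]
    linear_combination (modThree (phi 2) ^ 4 - modThree (phiNeg 2) ^ 4) * three_eq_zero_modThree
  have difference_eq_zero := eq_zero_of_mul_eq_mul_expand one_lt_two fixed one_ne_zero le_rfl <| by
    simp [constantCoeff_modThree, constantCoeff_phi, constantCoeff_phiNeg, map_ofNat,
      one_add_one_eq_two]
  simpa only [map_sub, map_add, map_pow, map_ofNat, sub_eq_zero] using difference_eq_zero

lemma modThree_phiNegTail :
    modThree phiNegTail = modThree (phiNeg 1) - modThree (phiNeg 1) ^ 9 := by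
  rw [phiNegTail, map_sub, modThree_phiNeg_three_mul 3, modThree_phiNeg_three_mul 1, ← pow_mul]

lemma modThree_phiNegCofactor : modThree phiNegCofactor = modThree (phiNeg 1) ^ 2 := by
  have square_add : phiNegCofactor = phiNeg 1 ^ 2 - 3 * (phiNeg 9 * phiNegTail) := by
    rw [phiNegCofactor, phiNegTail]
    ring
  rw [square_add, map_sub, map_mul, map_ofNat, three_eq_zero_modThree, map_pow, zero_mul, sub_zero]

lemma modThree_phiNegNorm : modThree phiNegNorm = modThree (phiNeg 1) := by
  have expand_eq : expand 3 three_ne_zero (modThree phiNegNorm) =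
      expand 3 three_ne_zero (modThree (phiNeg 1)) := by
    rw [← map_expand, expand_phiNegNorm, map_mul, modThree_phiNegCofactor, expand_eq_pow,
      ← pow_succ']
  rw [← dissection_expand three_ne_zero (modThree phiNegNorm), expand_eq, dissection_expand]

lemma dissection_three_modThree_phiNeg_sq :
    dissection 3 2 (modThree (phiNeg 1) ^ 2) = modThree (dissection 3 2 (phiNegTail ^ 2)) := by
  have tail := phiNegTail_mem_residuePart
  have nine := phiNeg_nine_mem_residuePart
  have dissected :
      phiNeg 1 ^ 2 = phiNegTail ^ 2 + (phiNeg 9 ^ 2 + 2 • (phiNeg 9 * phiNegTail)) := by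
    rw [phiNegTail]
    ring
  rw [← map_pow, ← map_dissection, dissected, map_add (dissection 3 2), map_add (dissection 3 2),
    dissection_eq_zero (SetLike.pow_mem_graded 2 nine) (by decide),
    dissection_eq_zero (nsmul_mem (SetLike.mul_mem_graded nine tail) 2) (by decide),
    add_zero, add_zero]

lemma modThree_dissection_three_phiNegCofactor_pow_four :
    modThree (dissection 3 2 (phiNegCofactor ^ 4)) =
      modThree (dissection 3 2 (phiNegTail ^ 2)) * modThree (phiNeg 1) ^ 2 := by
  rw [← dissection_three_modThree_phiNeg_sq, ← dissection_mul_expand (by decide), expand_eq_pow,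
    map_dissection, map_pow, modThree_phiNegCofactor, ← pow_succ']

lemma exists_four_mul_dissection_eq_nine_mul :
    ∃ L : ℤ⟦X⟧, 4 * dissection 3 2 (dissection 4 0 (rbarSeries 4 9)) = 9 * L ∧
      modThree L = -(modThree (dissection 3 2 (phiNegTail ^ 2)) * modThree (phiNeg 1) ^ 2) := by
  have isUnit : IsUnit (phiNeg 3 * phiNegNorm ^ 4) := by
    rw [isUnit_iff_constantCoeff, map_mul, map_pow, constantCoeff_phiNeg, constantCoeff_phiNegNorm,
      one_pow, one_mul]
    exact isUnit_one
  have identity := four_mul_dissection_three_dissection_four_rbarSeries_mul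
  obtain ⟨L, hL⟩ := isUnit.dvd_mul_right.1 (Dvd.intro _ identity.symm)
  refine ⟨L, hL, mul_right_cancel₀ (pow_ne_zero 7 modThree_phiNeg_one_ne_zero) ?_⟩
  have nine_ne_zero : (9 : ℤ⟦X⟧) ≠ 0 := fun h => by
    simpa [map_ofNat] using congrArg constantCoeff h
  rw [hL, mul_assoc] at identity
  have reduced := congrArg modThree (mul_left_cancel₀ nine_ne_zero identity)
  simp only [map_add, map_sub, map_mul, map_pow, map_ofNat, modThree_phiNegNorm,
    modThree_dissection_three_phiNegCofactor_pow_four, modThree_phiNeg_three_mul 1,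
    modThree_phi_three_mul 1] at reduced
  set v := modThree (dissection 3 2 (phiNegTail ^ 2))
  linear_combination reduced
    + 2 * v * modThree (phiNeg 1) ^ 9 * modThree_phi_pow_four_add_phiNeg_pow_four
    + 2 * v * modThree (phiNeg 1) ^ 9 * (1 - modThree (phi 1) ^ 4) * three_eq_zero_modThree

lemma modThree_phiNeg_pow_four_sub_one_mem_residuePart :
    modThree (phiNeg 1) ^ 4 - 1 ∈ residuePart (ZMod 3) 2 1 := by
  set P := modThree (phi 4)
  set Q := modThree (oddTheta 1)
  have even : P ∈ residuePart (ZMod 3) 2 0 :=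
    map_mem_residuePart _ (theta_mul_mem_residuePart _ 2 2)
  have odd : Q ∈ residuePart (ZMod 3) 2 1 :=
    map_mem_residuePart _ (oddTheta_mem_residuePart (by decide) 1)
  have eq_neg : modThree (phiNeg 1) ^ 4 - 1 = -(P ^ 3 * Q + P * Q ^ 3) := by
    have sum := modThree_phi_pow_four_add_phiNeg_pow_four
    rw [phi_eq_add 1, phiNeg_eq_sub 1, map_add, map_sub] at sum
    rw [phiNeg_eq_sub 1, map_sub]
    linear_combination 2 * sum +
      (1 - P ^ 4 - Q ^ 4 - 6 * P ^ 2 * Q ^ 2 - P ^ 3 * Q - P * Q ^ 3) * three_eq_zero_modThree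
  rw [eq_neg]
  exact neg_mem (add_mem (SetLike.mul_mem_graded (SetLike.pow_mem_graded 3 even) odd)
    (SetLike.mul_mem_graded even (SetLike.pow_mem_graded 3 odd)))

lemma modThree_dissection_mul_phiNeg_sq_mem_residuePart :
    modThree (dissection 3 2 (phiNegTail ^ 2)) * modThree (phiNeg 1) ^ 2 ∈
      residuePart (ZMod 3) 2 0 := by
  set e := modThree (phiNeg 1) ^ 4 - 1 with he
  have odd : e ∈ residuePart (ZMod 3) 2 1 := modThree_phiNeg_pow_four_sub_one_mem_residuePart
  have square : X ^ 2 * expand 3 three_ne_zero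
      (modThree (dissection 3 2 (phiNegTail ^ 2)) * modThree (phiNeg 1) ^ 2) = (e - e ^ 3) ^ 2 := by
    have tail : X ^ 2 * expand 3 three_ne_zero (dissection 3 2 (phiNegTail ^ 2)) = phiNegTail ^ 2 :=
      X_pow_mul_expand_dissection (by decide) (SetLike.pow_mem_graded 2 phiNegTail_mem_residuePart)
    have tail_modThree := congrArg modThree tail
    simp only [map_mul modThree, map_pow modThree, map_X, modThree_expand_three,
      modThree_phiNegTail] at tail_modThree
    rw [expand_eq_pow, he]
    linear_combination modThree (phiNeg 1) ^ 6 * tail_modThree -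
      modThree (phiNeg 1) ^ 8 * (1 - modThree (phiNeg 1) ^ 4) ^ 2 *
        (1 - 2 * modThree (phiNeg 1) ^ 4) * three_eq_zero_modThree
  intro n hn
  rw [← coeff_expand_mul 3 three_ne_zero, ← coeff_X_pow_mul _ 2, square]
  refine SetLike.pow_mem_graded 2 (sub_mem odd (SetLike.pow_mem_graded 3 odd)) _ fun h => hn ?_
  push_cast at h
  generalize (n : ZMod 2) = m at *
  decide +revert

end ModThree

theorem Rbar_four_nine_24n_20_mod_27 (n : ℕ) :
    Rbar 4 9 (24 * n + 20) ≡ 0 [MOD 27] := by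
  obtain ⟨L, hL, hL_modThree⟩ := exists_four_mul_dissection_eq_nine_mul
  have odd_coeff : coeff (2 * n + 1) (modThree L) = 0 := by
    rw [hL_modThree]
    refine neg_mem modThree_dissection_mul_phiNeg_sq_mem_residuePart _ ?_
    rw [Nat.cast_add, Nat.cast_mul, ZMod.natCast_self 2, zero_mul, zero_add, Nat.cast_one]
    exact one_ne_zero
  have three_dvd : (3 : ℤ) ∣ coeff (2 * n + 1) L := by
    rwa [coeff_map, eq_intCast, ZMod.intCast_zmod_eq_zero_iff_dvd] at odd_coeff
  have coeff_eq : 4 * (Rbar 4 9 (24 * n + 20) : ℤ) = 9 * coeff (2 * n + 1) L := by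
    have := congrArg (coeff (2 * n + 1)) hL
    rwa [← map_ofNat C 4, ← map_ofNat C 9, coeff_C_mul, coeff_C_mul, coeff_dissection,
      coeff_dissection, rbarSeries, coeff_mk,
      show 4 * (3 * (2 * n + 1) + 2) + 0 = 24 * n + 20 by ring] at this
  rw [Nat.modEq_zero_iff_dvd]
  omega
end

section
/- Let ℓ, μ ≥ 2 be coprime integers. For all integers n ≥ 1, the number of (ℓ,μ)-regular overpartitions satisfies R̄_{ℓ,μ}(n) ≡ 0 (mod 2). -/
/-!
The parts `i` allowed in an overpartition contribute the factors `(1 + Xⁱ) / (1 - Xⁱ)` to its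
generating function. In characteristic two `1 + Xⁱ = 1 - Xⁱ`, so each factor, and hence the whole
product, equals `1`: every coefficient of positive index is even.
-/

section GeneratingFunctions

open PowerSeries PowerSeries.WithPiTopology Nat.Partition

theorem hasProd_powerSeriesMk_card_distincts_inter_restricted (R : Type*) [CommSemiring R]
    [TopologicalSpace R] [T2Space R] (p : ℕ → Prop) [DecidablePred p] :
    HasProd (fun i ↦ if p (i + 1) then (1 + X ^ (i + 1) : R⟦X⟧) else 1)
      (PowerSeries.mk fun n ↦ ((distincts n ∩ restricted n p).card : R)) := by
  convert! hasProd_genFun (fun i c ↦ if c < 2 ∧ p i then (1 : R) else 0) using 1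
  · ext1 i
    rw [tsum_eq_single 0 fun j hj ↦ by simp [hj]]
    by_cases hp : p (i + 1) <;> simp [hp]
  · ext n
    simp only [coeff_mk, coeff_genFun, ← countRestricted_two, countRestricted, restricted,
      ← Finset.filter_and, Finset.card_filter, Finsupp.prod, Finset.prod_boole]
    simp [forall_and]

theorem powerSeriesMk_card_restricted_mul_distincts_inter_restricted_eq_one (R : Type*) [CommRing R]
    [CharP R 2] (p : ℕ → Prop) [DecidablePred p] :
    (PowerSeries.mk fun n ↦ ((restricted n p).card : R)) *
      (PowerSeries.mk fun n ↦ ((distincts n ∩ restricted n p).card : R)) = 1 := by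
  let _ : TopologicalSpace R := ⊥
  have _ : DiscreteTopology R := ⟨rfl⟩
  have _ : CharP R⟦X⟧ 2 := charP_of_injective_ringHom C_injective 2
  have factor_eq_one (i : ℕ) : (∑' j : ℕ, (X : R⟦X⟧) ^ ((i + 1) * j)) * (1 + X ^ (i + 1)) = 1 := by
    simp_rw [pow_mul, ← CharTwo.sub_eq_add]
    exact tsum_pow_mul_one_sub_of_constantCoeff_eq_zero (by simp)
  refine ((hasProd_powerSeriesMk_card_restricted R p).mul
    (hasProd_powerSeriesMk_card_distincts_inter_restricted R p)).unique ?_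
  convert! hasProd_one using 2 with i
  split_ifs
  · exact factor_eq_one i
  · exact one_mul 1

theorem regularCount_eq_card_restricted (ℓ μ a : ℕ) :
    regularCount ℓ μ a = (restricted a fun i ↦ ¬ ℓ ∣ i ∧ ¬ μ ∣ i).card :=
  Fintype.card_subtype _

theorem regularDistinctCount_eq_card_distincts_inter_restricted (ℓ μ a : ℕ) :
    regularDistinctCount ℓ μ a =
      (distincts a ∩ restricted a fun i ↦ ¬ ℓ ∣ i ∧ ¬ μ ∣ i).card := by
  rw [distincts, restricted, ← Finset.filter_and, regularDistinctCount, Fintype.card_subtype]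

theorem powerSeriesMk_Rbar_eq_mul (R : Type*) [CommSemiring R] (ℓ μ : ℕ) :
    (PowerSeries.mk fun n ↦ (Rbar ℓ μ n : R)) =
      (PowerSeries.mk fun n ↦ (regularCount ℓ μ n : R)) *
        PowerSeries.mk fun n ↦ (regularDistinctCount ℓ μ n : R) := by
  ext n
  simp [Rbar, coeff_mul]

theorem powerSeriesMk_Rbar_eq_one (R : Type*) [CommRing R] [CharP R 2] (ℓ μ : ℕ) :
    (PowerSeries.mk fun n ↦ (Rbar ℓ μ n : R)) = 1 := by
  simp_rw [powerSeriesMk_Rbar_eq_mul, regularCount_eq_card_restricted,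
    regularDistinctCount_eq_card_distincts_inter_restricted]
  exact powerSeriesMk_card_restricted_mul_distincts_inter_restricted_eq_one R _

theorem Rbar_even_general (ℓ μ n : ℕ) (hn : 1 ≤ n) :
    Rbar ℓ μ n ≡ 0 [MOD 2] := by
  have coeff_eq := congrArg (coeff n) (powerSeriesMk_Rbar_eq_one (ZMod 2) ℓ μ)
  rw [coeff_mk, coeff_one, if_neg (Nat.one_le_iff_ne_zero.mp hn)] at coeff_eq
  exact (ZMod.natCast_eq_natCast_iff _ _ _).mp (by simpa using coeff_eq)

end GeneratingFunctions

theorem Rbar_even (ℓ μ : ℕ) (hℓ : 2 ≤ ℓ) (hμ : 2 ≤ μ) (hcop : Nat.Coprime ℓ μ)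
    (n : ℕ) (hn : 1 ≤ n) :
    Rbar ℓ μ n ≡ 0 [MOD 2] :=
  Rbar_even_general ℓ μ n hn
end
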